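/- arXiv:1507.04132 — 3 statements merged into one kernel-verified Lean document; each statement's English description precedes it below -/
import Mathlib

section
/- Let T be a totally ergodic automorphism of a standard Borel probability space (X,μ) having the AOP property. Let S be a uniquely ergodic continuous map of a compact metric space Y with unique S-invariant probability measure ν, and assume that the measure-theoretic systems (X,μ,T) and (Y,ν,S) are measure-theoretically isomorphic. Then for every multiplicative function u : ℕ → ℂ with |u(n)| ≤ 1, every continuous f : Y → ℂ with ∫_Y f dν = 0, and every y ∈ Y, one has (1/N) Σ_{n ≤ N} f(Sⁿy) u(n) → 0 as N → ∞. -/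
open MeasureTheory Filter

/-- `T` is totally ergodic: every nonzero power of `T` is ergodic. -/
def TotallyErgodic {X : Type*} [MeasurableSpace X] (T : X → X) (μ : Measure X) : Prop :=
  ∀ m : ℕ, m ≠ 0 → Ergodic (T^[m]) μ

/-- `(X,μ,T)` has asymptotically orthogonal powers (AOP): for all `f, g ∈ L²(μ)` of zero mean
and every `ε > 0` there is `N` such that for all distinct primes `r, s ≥ N` and every ergodic
joining `κ` of `T^r` and `T^s`, `|∫ f(x) conj(g(y)) dκ(x,y)| ≤ ε`. -/
def AOP {X : Type*} [MeasurableSpace X] (T : X → X) (μ : Measure X) : Prop :=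
  ∀ f g : X → ℂ, MemLp f 2 μ → MemLp g 2 μ →
    (∫ x, f x ∂μ) = 0 → (∫ x, g x ∂μ) = 0 →
    ∀ ε > (0:ℝ), ∃ N : ℕ, ∀ r s : ℕ, r.Prime → s.Prime → r ≠ s → N ≤ r → N ≤ s →
      ∀ κ : Measure (X × X), IsProbabilityMeasure κ →
        κ.map Prod.fst = μ → κ.map Prod.snd = μ →
        Ergodic (Prod.map (T^[r]) (T^[s])) κ →
        ‖∫ p, f p.1 * (starRingEnd ℂ) (g p.2) ∂κ‖ ≤ ε

/-- `S` is uniquely ergodic with unique invariant Borel probability measure `ν`. -/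
def UniquelyErgodicWith {Y : Type*} [MeasurableSpace Y] (S : Y → Y) (ν : Measure Y) : Prop :=
  IsProbabilityMeasure ν ∧ ν.map S = ν ∧
  ∀ μ' : Measure Y, IsProbabilityMeasure μ' → μ'.map S = μ' → μ' = ν

/-- `(X,μ,T)` and `(Y,ν,S)` are measure-theoretically isomorphic: there is an invertible
(mod 0) measure-preserving map intertwining the transformations almost everywhere. -/
def MeasureIso {X Y : Type*} [MeasurableSpace X] [MeasurableSpace Y]
    (T : X → X) (μ : Measure X) (S : Y → Y) (ν : Measure Y) : Prop :=
  ∃ φ : X → Y, ∃ ψ : Y → X, Measurable φ ∧ Measurable ψ ∧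
    μ.map φ = ν ∧
    (∀ᵐ x ∂μ, ψ (φ x) = x) ∧ (∀ᵐ y ∂ν, φ (ψ y) = y) ∧
    (∀ᵐ x ∂μ, φ (T x) = S (φ x))

/-!
By invariance under isomorphism, `S` itself is totally ergodic with asymptotically orthogonal
powers. Total ergodicity makes every nonzero power of `S` uniquely ergodic, so for primes `r ≠ s`
every ergodic measure of `S^r × S^s` is a joining, and the AOP bound holds for all of them. A
weak-* limit of empirical measures is invariant and, by Krein–Milman applied to the face of
maximizing invariant measures, obeys the same bound. Hence the correlations of `n ↦ f (Sⁿ y)`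
along `r n` and `s n` are small for large distinct primes. This is the hypothesis of the
Kátai–Bourgain–Sarnak–Ziegler criterion: with `a n = f (Sⁿ y)`, the Turán–Kubilius inequality
turns the sum of `u n * a n` into an average over primes `p` of the sums of `u p * u m * a (p * m)`,
and the Cauchy–Schwarz inequality in each dyadic block of primes removes `u`.
-/

open scoped BoundedContinuousFunction ENNReal Topology

section TuranKubilius

open Finset

theorem sum_filter_dvd_Icc {M : Type*} [AddCommMonoid M] (p N : ℕ) (g : ℕ → M) :
    ∑ n ∈ Icc 1 N with p ∣ n, g n = ∑ m ∈ Icc 1 (N / p), g (p * m) := by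
  rcases p.eq_zero_or_pos with rfl | hp
  · rw [filter_false_of_mem fun n hn h => Nat.one_le_iff_ne_zero.1 (mem_Icc.1 hn).1
      (zero_dvd_iff.1 h), Nat.div_zero, Icc_eq_empty_of_lt one_pos, sum_empty, sum_empty]
  symm
  refine sum_bij (fun m _ => p * m) (fun m hm => ?_)
    (fun _ _ _ _ h => Nat.eq_of_mul_eq_mul_left hp h) (fun n hn => ?_) (fun _ _ => rfl)
  · rw [mem_Icc] at hm
    exact mem_filter.2 ⟨mem_Icc.2 ⟨Nat.mul_pos hp hm.1,
      (Nat.mul_le_mul_left p hm.2).trans (Nat.mul_div_le N p)⟩, dvd_mul_right p m⟩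
  · obtain ⟨hn, m, rfl⟩ := mem_filter.1 hn
    rw [mem_Icc] at hn
    exact ⟨m, mem_Icc.2 ⟨Nat.pos_of_mul_pos_left hn.1, (Nat.le_div_iff_mul_le hp).2
      (by rw [mul_comm]; exact hn.2)⟩, rfl⟩

/-- The number `ω_P(n)` of elements of `P` dividing `n`. -/
def divisorCount (P : Finset ℕ) (n : ℕ) : ℕ := #{p ∈ P | p ∣ n}

/-- The sum of the reciprocals of the elements of `P`, which is the asymptotic mean of
`divisorCount P`. -/
noncomputable def reciprocalSum (P : Finset ℕ) : ℝ := ∑ p ∈ P, (p : ℝ)⁻¹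

theorem reciprocalSum_nonneg (P : Finset ℕ) : 0 ≤ reciprocalSum P :=
  sum_nonneg fun _ _ => by positivity

theorem sum_divisorCount_nsmul {M : Type*} [AddCommMonoid M] (P : Finset ℕ) (N : ℕ)
    (g : ℕ → M) :
    ∑ n ∈ Icc 1 N, divisorCount P n • g n = ∑ p ∈ P, ∑ m ∈ Icc 1 (N / p), g (p * m) := by
  simp only [divisorCount, ← sum_const, ← sum_filter_dvd_Icc, sum_filter]
  exact sum_comm

theorem sum_divisorCount (P : Finset ℕ) (N : ℕ) :
    ∑ n ∈ Icc 1 N, divisorCount P n = ∑ p ∈ P, N / p := by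
  simpa only [smul_eq_mul, mul_one, sum_const, Nat.card_Icc, add_tsub_cancel_right] using
    sum_divisorCount_nsmul P N fun _ => (1 : ℕ)

theorem sum_natCast_div_le (P : Finset ℕ) (N : ℕ) :
    ∑ p ∈ P, ((N / p : ℕ) : ℝ) ≤ N * reciprocalSum P := by
  rw [reciprocalSum, mul_sum]
  exact sum_le_sum fun p _ => Nat.cast_div_le.trans_eq (div_eq_mul_inv _ _)

theorem le_sum_divisorCount (P : Finset ℕ) (N : ℕ) :
    N * reciprocalSum P - #P ≤ ∑ n ∈ Icc 1 N, (divisorCount P n : ℝ) := by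
  rw [← Nat.cast_sum, sum_divisorCount, Nat.cast_sum, reciprocalSum, mul_sum, card_eq_sum_ones,
    Nat.cast_sum, ← sum_sub_distrib]
  refine sum_le_sum fun p _ => ?_
  have := Nat.lt_floor_add_one ((N : ℝ) / p)
  rw [Nat.floor_div_natCast, Nat.floor_natCast] at this
  rw [← div_eq_mul_inv, Nat.cast_one]
  exact sub_le_iff_le_add.2 this.le

theorem divisorCount_mul_le {P : Finset ℕ} (hP : (P : Set ℕ).Pairwise Nat.Coprime) {p : ℕ}
    (hp : p ∈ P) (m : ℕ) : divisorCount P (p * m) ≤ 1 + divisorCount P m := by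
  have hsub : {q ∈ P | q ∣ p * m} ⊆ insert p {q ∈ P | q ∣ m} := fun q hq => by
    obtain ⟨hqP, hqpm⟩ := mem_filter.1 hq
    rcases eq_or_ne q p with rfl | hqp
    · exact mem_insert_self _ _
    · exact mem_insert_of_mem (mem_filter.2
        ⟨hqP, (hP hqP hp hqp).dvd_of_dvd_mul_left hqpm⟩)
  rw [add_comm]
  exact (card_le_card hsub).trans (card_insert_le _ _)

theorem sum_divisorCount_sq_le {P : Finset ℕ} (hP : (P : Set ℕ).Pairwise Nat.Coprime) (N : ℕ) :
    ∑ n ∈ Icc 1 N, (divisorCount P n : ℝ) ^ 2 ≤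
      N * reciprocalSum P * (1 + reciprocalSum P) := by
  have hA := reciprocalSum_nonneg P
  have hinner {p : ℕ} (hp : p ∈ P) : ∑ m ∈ Icc 1 (N / p), (divisorCount P (p * m) : ℝ) ≤
      (N / p : ℕ) * (1 + reciprocalSum P) := calc
    _ ≤ ∑ m ∈ Icc 1 (N / p), (1 + divisorCount P m : ℝ) :=
      sum_le_sum fun m _ => by exact_mod_cast divisorCount_mul_le hP hp m
    _ = (N / p : ℕ) + ∑ q ∈ P, ((N / p / q : ℕ) : ℝ) := by
      rw [sum_add_distrib, ← Nat.cast_sum, sum_divisorCount, Nat.cast_sum]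
      simp
    _ ≤ (N / p : ℕ) * (1 + reciprocalSum P) := by
      rw [mul_add, mul_one]
      gcongr
      exact sum_natCast_div_le P _
  calc ∑ n ∈ Icc 1 N, (divisorCount P n : ℝ) ^ 2
      = ∑ p ∈ P, ∑ m ∈ Icc 1 (N / p), (divisorCount P (p * m) : ℝ) := by
        rw [← sum_divisorCount_nsmul P N fun n => (divisorCount P n : ℝ)]
        simp only [nsmul_eq_mul, sq]
    _ ≤ ∑ p ∈ P, (N / p : ℕ) * (1 + reciprocalSum P) := sum_le_sum fun p hp => hinner hp
    _ ≤ N * reciprocalSum P * (1 + reciprocalSum P) := by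
        rw [← sum_mul]
        gcongr
        exact sum_natCast_div_le P N

theorem turan_kubilius {P : Finset ℕ} (hP : (P : Set ℕ).Pairwise Nat.Coprime) (N : ℕ) :
    ∑ n ∈ Icc 1 N, (divisorCount P n - reciprocalSum P) ^ 2 ≤
      reciprocalSum P * (N + 2 * #P) := by
  set A := reciprocalSum P
  have hA : 0 ≤ A := reciprocalSum_nonneg P
  calc ∑ n ∈ Icc 1 N, (divisorCount P n - A) ^ 2
      = ∑ n ∈ Icc 1 N, (divisorCount P n : ℝ) ^ 2
          - 2 * A * ∑ n ∈ Icc 1 N, (divisorCount P n : ℝ) + N * A ^ 2 := by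
        simp only [sub_sq, sum_add_distrib, sum_sub_distrib, mul_sum, sum_const, Nat.card_Icc,
          add_tsub_cancel_right, nsmul_eq_mul]
        simp only [mul_right_comm (2 : ℝ)]
    _ ≤ N * A * (1 + A) - 2 * A * (N * A - #P) + N * A ^ 2 := by
        gcongr
        exacts [sum_divisorCount_sq_le hP N, le_sum_divisorCount P N]
    _ = A * (N + 2 * #P) := by ring

theorem norm_reciprocalSum_smul_sum_sub_le {𝕜 E : Type*} [RCLike 𝕜] [NormedAddCommGroup E]
    [NormedSpace 𝕜 E] {P : Finset ℕ} (hP : (P : Set ℕ).Pairwise Nat.Coprime) {N : ℕ}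
    (hN : 2 * #P ≤ N) {b : ℕ → E} {B : ℝ} (hb : ∀ n, ‖b n‖ ≤ B) :
    ‖(reciprocalSum P : 𝕜) • ∑ n ∈ Icc 1 N, b n - ∑ p ∈ P, ∑ m ∈ Icc 1 (N / p), b (p * m)‖ ≤
      N * (B * √(2 * reciprocalSum P)) := by
  set A := reciprocalSum P
  have hA : 0 ≤ A := reciprocalSum_nonneg P
  have hB : 0 ≤ B := (norm_nonneg _).trans (hb 0)
  have hN' : (2 * #P : ℝ) ≤ N := by exact_mod_cast hN
  have hdev : (∑ n ∈ Icc 1 N, |divisorCount P n - A|) ^ 2 ≤ (N * √(2 * A)) ^ 2 := calc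
    _ ≤ #(Icc 1 N) * ∑ n ∈ Icc 1 N, |divisorCount P n - A| ^ 2 := sq_sum_le_card_mul_sum_sq
    _ ≤ N * (A * (N + 2 * #P)) := by
      simp only [Nat.card_Icc, add_tsub_cancel_right, sq_abs]
      gcongr
      exact turan_kubilius hP N
    _ ≤ N * (A * (N + N)) := by gcongr
    _ = (N * √(2 * A)) ^ 2 := by
      rw [mul_pow, Real.sq_sqrt (by positivity)]
      ring
  have hsum : (A : 𝕜) • ∑ n ∈ Icc 1 N, b n - ∑ p ∈ P, ∑ m ∈ Icc 1 (N / p), b (p * m) =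
      ∑ n ∈ Icc 1 N, ((A - divisorCount P n : ℝ) : 𝕜) • b n := by
    rw [← sum_divisorCount_nsmul, smul_sum, ← sum_sub_distrib]
    refine sum_congr rfl fun n _ => ?_
    rw [RCLike.ofReal_sub, RCLike.ofReal_natCast, sub_smul, Nat.cast_smul_eq_nsmul]
  calc _ ≤ ∑ n ∈ Icc 1 N, |divisorCount P n - A| * B := by
        rw [hsum]
        refine norm_sum_le_of_le _ fun n _ => ?_
        rw [norm_smul, RCLike.norm_ofReal, abs_sub_comm]
        gcongr
        exact hb n
    _ ≤ N * √(2 * A) * B := by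
        rw [← sum_mul]
        gcongr
        exact (abs_le_of_sq_le_sq' hdev (by positivity)).2
    _ = N * (B * √(2 * A)) := by ring

end TuranKubilius

section BilinearSums

open Finset

variable {𝕜 E : Type*} [RCLike 𝕜] [NormedAddCommGroup E] [InnerProductSpace 𝕜 E]

theorem sum_norm_sq_sum_le {ι κ : Type*} {Q : Finset ι} {s : Finset κ} {b : ι → κ → E} {B δ : ℝ}
    (hb : ∀ p ∈ Q, ∀ m ∈ s, ‖b p m‖ ≤ B) (hδ : 0 ≤ δ)
    (hcorr : ∀ p ∈ Q, ∀ q ∈ Q, p ≠ q → ‖∑ m ∈ s, inner 𝕜 (b p m) (b q m)‖ ≤ δ) :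
    ∑ m ∈ s, ‖∑ p ∈ Q, b p m‖ ^ 2 ≤ #Q * (#s * B ^ 2) + #Q ^ 2 * δ := by
  classical
  have hpair : ∀ p ∈ Q, ∀ q ∈ Q, ‖∑ m ∈ s, inner 𝕜 (b p m) (b q m)‖ ≤
      (if p = q then #s * B ^ 2 else 0) + δ := by
    intro p hp q hq
    split_ifs with hpq
    · have hdiag : ‖∑ m ∈ s, inner 𝕜 (b p m) (b q m)‖ ≤ ∑ _m ∈ s, B ^ 2 := by
        refine norm_sum_le_of_le _ fun m hm => (norm_inner_le_norm _ _).trans ?_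
        rw [sq]
        exact mul_le_mul (hb p hp m hm) (hb q hq m hm) (norm_nonneg _)
          ((norm_nonneg _).trans (hb p hp m hm))
      rw [sum_const, nsmul_eq_mul] at hdiag
      exact hdiag.trans (le_add_of_nonneg_right hδ)
    · exact (hcorr p hp q hq hpq).trans_eq (zero_add δ).symm
  have hexpand : ((∑ m ∈ s, ‖∑ p ∈ Q, b p m‖ ^ 2 : ℝ) : 𝕜) =
      ∑ p ∈ Q, ∑ q ∈ Q, ∑ m ∈ s, inner 𝕜 (b p m) (b q m) := by
    push_cast
    simp only [← inner_self_eq_norm_sq_to_K, sum_inner, inner_sum]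
    rw [sum_comm, sum_comm (s := Q) (t := Q)]
    exact sum_congr rfl fun q _ => sum_comm
  calc ∑ m ∈ s, ‖∑ p ∈ Q, b p m‖ ^ 2
      = ‖∑ p ∈ Q, ∑ q ∈ Q, ∑ m ∈ s, inner 𝕜 (b p m) (b q m)‖ := by
        rw [← hexpand, RCLike.norm_of_nonneg (sum_nonneg fun m _ => by positivity)]
    _ ≤ ∑ p ∈ Q, ∑ q ∈ Q, ((if p = q then #s * B ^ 2 else 0) + δ) :=
        norm_sum_le_of_le _ fun p hp => norm_sum_le_of_le _ fun q hq => hpair p hp q hq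
    _ = #Q * (#s * B ^ 2) + #Q ^ 2 * δ := by
        simp only [sum_add_distrib, sum_ite_eq, sum_ite_mem, inter_self, sum_const, nsmul_eq_mul]
        ring

theorem norm_sum_smul_sum_sq_le {ι κ : Type*} {Q : Finset ι} {s : Finset κ} {b : ι → κ → E}
    {u : κ → 𝕜} {B δ : ℝ} (hb : ∀ p ∈ Q, ∀ m ∈ s, ‖b p m‖ ≤ B) (hu : ∀ m, ‖u m‖ ≤ 1)
    (hδ : 0 ≤ δ) (hcorr : ∀ p ∈ Q, ∀ q ∈ Q, p ≠ q → ‖∑ m ∈ s, inner 𝕜 (b p m) (b q m)‖ ≤ δ) :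
    ‖∑ m ∈ s, u m • ∑ p ∈ Q, b p m‖ ^ 2 ≤ #s * (#Q * (#s * B ^ 2) + #Q ^ 2 * δ) := calc
  _ ≤ (∑ m ∈ s, ‖∑ p ∈ Q, b p m‖) ^ 2 := by
    gcongr
    refine norm_sum_le_of_le _ fun m _ => ?_
    rw [norm_smul]
    exact mul_le_of_le_one_left (norm_nonneg _) (hu m)
  _ ≤ #s * ∑ m ∈ s, ‖∑ p ∈ Q, b p m‖ ^ 2 := sq_sum_le_card_mul_sum_sq
  _ ≤ _ := by
    gcongr
    exact sum_norm_sq_sum_le hb hδ hcorr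

theorem norm_sum_sum_Icc_smul_sq_le {ι : Type*} {Q : Finset ι} {len : ι → ℕ} {L : ℕ}
    (hlen : ∀ p ∈ Q, len p ≤ L) {b : ι → ℕ → E} {u : ℕ → 𝕜} {B δ : ℝ}
    (hb : ∀ p ∈ Q, ∀ m, ‖b p m‖ ≤ B) (hu : ∀ m, ‖u m‖ ≤ 1) (hδ : 0 ≤ δ)
    (hcorr : ∀ p ∈ Q, ∀ q ∈ Q, p ≠ q →
      ‖∑ m ∈ Icc 1 (min (len p) (len q)), inner 𝕜 (b p m) (b q m)‖ ≤ δ) :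
    ‖∑ p ∈ Q, ∑ m ∈ Icc 1 (len p), u m • b p m‖ ^ 2 ≤ L * (#Q * (L * B ^ 2) + #Q ^ 2 * δ) := by
  let c (p : ι) (m : ℕ) : E := if m ≤ len p then b p m else 0
  have hIcc {l : ℕ} (hl : l ≤ L) : {m ∈ Icc 1 L | m ≤ l} = Icc 1 l := by
    ext m
    simp only [mem_filter, mem_Icc]
    omega
  have hc : ∀ p ∈ Q, ∀ m ∈ Icc 1 L, ‖c p m‖ ≤ B := fun p hp m _ => by
    simp only [c]
    split_ifs
    exacts [hb p hp m, norm_zero.trans_le ((norm_nonneg _).trans (hb p hp m))]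
  have hc_corr : ∀ p ∈ Q, ∀ q ∈ Q, p ≠ q → ‖∑ m ∈ Icc 1 L, inner 𝕜 (c p m) (c q m)‖ ≤ δ := by
    intro p hp q hq hpq
    have hc_inner (m : ℕ) : inner 𝕜 (c p m) (c q m) =
        if m ≤ min (len p) (len q) then inner 𝕜 (b p m) (b q m) else 0 := by
      by_cases hmp : m ≤ len p <;> by_cases hmq : m ≤ len q <;> simp [c, hmp, hmq]
    simp only [hc_inner]
    rw [← sum_filter, hIcc ((min_le_left _ _).trans (hlen p hp))]
    exact hcorr p hp q hq hpq
  have hsum : ∑ p ∈ Q, ∑ m ∈ Icc 1 (len p), u m • b p m =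
      ∑ m ∈ Icc 1 L, u m • ∑ p ∈ Q, c p m := by
    simp only [smul_sum]
    rw [sum_comm]
    refine sum_congr rfl fun p hp => ?_
    simp only [← hIcc (hlen p hp), sum_filter, c, smul_ite, smul_zero]
  simpa only [hsum, Nat.card_Icc, add_tsub_cancel_right] using
    norm_sum_smul_sum_sq_le hc hu hδ hc_corr

variable (𝕜) in
/-- The correlation up to `M` of the dilated sequences `m ↦ a (p * m)` and `m ↦ a (q * m)`. -/
noncomputable def dilationCorrelation (a : ℕ → E) (p q M : ℕ) : 𝕜 :=
  ∑ m ∈ Icc 1 M, inner 𝕜 (a (p * m)) (a (q * m))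

/-- The elements of `P` in the dyadic interval `[2 ^ j, 2 ^ (j + 1))`; for `j = 0` also the
number `0`, since `Nat.log 2 0 = 0`. -/
def dyadicBlock (P : Finset ℕ) (j : ℕ) : Finset ℕ := {p ∈ P | Nat.log 2 p = j}

theorem div_max_eq_min_div (N : ℕ) {p q : ℕ} (hp : 0 < p) (hq : 0 < q) :
    N / max p q = min (N / p) (N / q) := by
  rcases le_total p q with h | h
  · rw [max_eq_right h, min_eq_right (Nat.div_le_div_left h hp)]
  · rw [max_eq_left h, min_eq_left (Nat.div_le_div_left h hq)]

theorem norm_bilinear_sum_le_of_forall_ge {a : ℕ → E} {u v : ℕ → 𝕜} {B ε : ℝ}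
    (ha : ∀ n, ‖a n‖ ≤ B) (hu : ∀ n, ‖u n‖ ≤ 1) (hv : ∀ n, ‖v n‖ ≤ 1) (hε : 0 ≤ ε)
    {Q : Finset ℕ} {D N : ℕ} (hD : 0 < D) (hQ : ∀ p ∈ Q, D ≤ p)
    (hcorr : ∀ p ∈ Q, ∀ q ∈ Q, p ≠ q →
      ‖dilationCorrelation 𝕜 a p q (N / max p q)‖ ≤ ε * (N / max p q : ℕ)) :
    ‖∑ p ∈ Q, ∑ m ∈ Icc 1 (N / p), (v p * u m) • a (p * m)‖ ≤
      N / D * (B * √(#Q) + √ε * #Q) := by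
  have hB : 0 ≤ B := (norm_nonneg _).trans (ha 0)
  have hND : ((N / D : ℕ) : ℝ) ≤ N / D := Nat.cast_div_le
  have hb (p m : ℕ) : ‖v p • a (p * m)‖ ≤ B := by
    rw [norm_smul]
    exact (mul_le_of_le_one_left (norm_nonneg _) (hv p)).trans (ha _)
  have hb_corr : ∀ p ∈ Q, ∀ q ∈ Q, p ≠ q → ‖∑ m ∈ Icc 1 (min (N / p) (N / q)),
      inner 𝕜 (v p • a (p * m)) (v q • a (q * m))‖ ≤ ε * (N / D) := by
    intro p hp q hq hpq
    simp only [inner_smul_left, inner_smul_right, ← mul_sum]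
    rw [← div_max_eq_min_div N (hD.trans_le (hQ p hp)) (hD.trans_le (hQ q hq)), norm_mul, norm_mul,
      RCLike.norm_conj, ← mul_assoc]
    calc _ ≤ ‖dilationCorrelation 𝕜 a p q (N / max p q)‖ := mul_le_of_le_one_left
          (norm_nonneg _) (mul_le_one₀ (hv q) (norm_nonneg _) (hv p))
      _ ≤ ε * (N / max p q : ℕ) := hcorr p hp q hq hpq
      _ ≤ ε * (N / D : ℕ) := by
        gcongr
        exact (hQ p hp).trans (le_max_left _ _)
      _ ≤ ε * (N / D) := by gcongr
  refine (abs_le_of_sq_le_sq' ?_ (by positivity)).2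
  calc _ ≤ (N / D : ℕ) * (#Q * ((N / D : ℕ) * B ^ 2) + #Q ^ 2 * (ε * (N / D))) := by
        simpa only [smul_smul, mul_comm (u _)] using norm_sum_sum_Icc_smul_sq_le
          (fun p hp => Nat.div_le_div_left (hQ p hp) hD) (fun p _ => hb p) hu (by positivity)
          hb_corr
    _ ≤ N / D * (#Q * (N / D * B ^ 2) + #Q ^ 2 * (ε * (N / D))) := by gcongr
    _ = (N / D) ^ 2 * ((B * √(#Q)) ^ 2 + (√ε * #Q) ^ 2) := by
        simp only [mul_pow, Real.sq_sqrt hε, Real.sq_sqrt (Nat.cast_nonneg #Q)]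
        ring
    _ ≤ (N / D) ^ 2 * (B * √(#Q) + √ε * #Q) ^ 2 := by
        gcongr
        exact pow_add_pow_le (by positivity) (by positivity) two_ne_zero
    _ = (N / D * (B * √(#Q) + √ε * #Q)) ^ 2 := (mul_pow _ _ _).symm

theorem card_dyadicBlock_le {P : Finset ℕ} (hP : ∀ p ∈ P, p ≠ 0) (j : ℕ) :
    #(dyadicBlock P j) ≤ 2 ^ j := by
  have hsub : dyadicBlock P j ⊆ Ico (2 ^ j) (2 ^ (j + 1)) := fun p hp => by
    obtain ⟨hpP, rfl⟩ := mem_filter.1 hp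
    exact mem_Ico.2 ⟨Nat.pow_log_le_self 2 (hP p hpP), Nat.lt_pow_succ_log_self one_lt_two p⟩
  refine (card_le_card hsub).trans_eq ?_
  rw [Nat.card_Ico, pow_succ]
  omega

theorem card_dyadicBlock_div_le {P : Finset ℕ} (hP : ∀ p ∈ P, p ≠ 0) (j : ℕ) :
    (#(dyadicBlock P j) : ℝ) / 2 ^ j ≤ 2 * reciprocalSum (dyadicBlock P j) := by
  rw [reciprocalSum, card_eq_sum_ones, Nat.cast_sum, sum_div, mul_sum]
  refine sum_le_sum fun p hp => ?_
  obtain ⟨hpP, rfl⟩ := mem_filter.1 hp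
  have hp_lt : (p : ℝ) < 2 ^ (Nat.log 2 p + 1) := by
    exact_mod_cast Nat.lt_pow_succ_log_self one_lt_two p
  have hp_pos : (0 : ℝ) < p := Nat.cast_pos.2 (Nat.pos_of_ne_zero (hP p hpP))
  rw [Nat.cast_one, ← div_eq_mul_inv, div_le_div_iff₀ (by positivity) hp_pos, one_mul, ← pow_succ']
  exact hp_lt.le

theorem sqrt_card_dyadicBlock_div_le {P : Finset ℕ} (hP : ∀ p ∈ P, p ≠ 0) (j : ℕ) :
    √(#(dyadicBlock P j)) / 2 ^ j ≤ (3 / 4) ^ j := by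
  have hcard : (#(dyadicBlock P j) : ℝ) ≤ 2 ^ j := by exact_mod_cast card_dyadicBlock_le hP j
  rw [div_le_iff₀ (by positivity), ← mul_pow, Real.sqrt_le_left (by positivity), ← pow_mul,
    mul_comm j, pow_mul]
  exact hcard.trans (by gcongr; norm_num)

theorem norm_bilinear_sum_le {a : ℕ → E} {u v : ℕ → 𝕜} {B ε : ℝ} (ha : ∀ n, ‖a n‖ ≤ B)
    (hu : ∀ n, ‖u n‖ ≤ 1) (hv : ∀ n, ‖v n‖ ≤ 1) (hε : 0 ≤ ε) {P : Finset ℕ} {N : ℕ}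
    (hP : ∀ p ∈ P, p ≠ 0) (hcorr : ∀ p ∈ P, ∀ q ∈ P, p ≠ q →
      ‖dilationCorrelation 𝕜 a p q (N / max p q)‖ ≤ ε * (N / max p q : ℕ)) :
    ‖∑ p ∈ P, ∑ m ∈ Icc 1 (N / p), (v p * u m) • a (p * m)‖ ≤
      N * (4 * B + 2 * √ε * reciprocalSum P) := by
  have hB : 0 ≤ B := (norm_nonneg _).trans (ha 0)
  have hmaps : ∀ p ∈ P, Nat.log 2 p ∈ P.image (Nat.log 2) := fun p hp => mem_image_of_mem _ hp
  have hblock (j : ℕ) :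
      ‖∑ p ∈ dyadicBlock P j, ∑ m ∈ Icc 1 (N / p), (v p * u m) • a (p * m)‖ ≤
        N * (B * (3 / 4) ^ j + √ε * (2 * reciprocalSum (dyadicBlock P j))) := calc
    _ ≤ N / (2 ^ j : ℕ) * (B * √(#(dyadicBlock P j)) + √ε * #(dyadicBlock P j)) := by
      refine norm_bilinear_sum_le_of_forall_ge ha hu hv hε (by positivity) (fun p hp => ?_)
        fun p hp q hq => hcorr p (mem_filter.1 hp).1 q (mem_filter.1 hq).1
      obtain ⟨hpP, rfl⟩ := mem_filter.1 hp
      exact Nat.pow_log_le_self 2 (hP p hpP)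
    _ = N * (B * (√(#(dyadicBlock P j)) / 2 ^ j) + √ε * (#(dyadicBlock P j) / 2 ^ j)) := by
      push_cast
      ring
    _ ≤ _ := by
      gcongr
      exacts [sqrt_card_dyadicBlock_div_le hP j, card_dyadicBlock_div_le hP j]
  have hgeom : ∑ j ∈ P.image (Nat.log 2), (3 / 4 : ℝ) ^ j ≤ 4 := by
    have := (summable_geometric_of_lt_one (by norm_num) (by norm_num)).sum_le_tsum
      (P.image (Nat.log 2)) fun j _ => pow_nonneg (by norm_num : (0 : ℝ) ≤ 3 / 4) j
    rw [tsum_geometric_of_lt_one (by norm_num) (by norm_num)] at this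
    exact this.trans_eq (by norm_num)
  rw [← sum_fiberwise_of_maps_to hmaps]
  calc _ ≤ ∑ j ∈ P.image (Nat.log 2),
          N * (B * (3 / 4 : ℝ) ^ j + √ε * (2 * reciprocalSum (dyadicBlock P j))) :=
        norm_sum_le_of_le _ fun j _ => hblock j
    _ = N * ((∑ j ∈ P.image (Nat.log 2), (3 / 4 : ℝ) ^ j) * B + 2 * √ε * reciprocalSum P) := by
        rw [reciprocalSum, ← sum_fiberwise_of_maps_to hmaps]
        simp only [← mul_sum, sum_add_distrib, reciprocalSum, dyadicBlock]
        ring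
    _ ≤ N * (4 * B + 2 * √ε * reciprocalSum P) := by gcongr

end BilinearSums

section MultiplicativeSums

open Finset

variable {𝕜 E : Type*} [RCLike 𝕜] [NormedAddCommGroup E]

theorem norm_sum_multiplicative_defect_le [NormedSpace 𝕜 E] {u : ℕ → 𝕜} (hu : ∀ n, ‖u n‖ ≤ 1)
    (hmult : ∀ m n, Nat.Coprime m n → u (m * n) = u m * u n) {b : ℕ → E} {B : ℝ}
    (hb : ∀ n, ‖b n‖ ≤ B) {p : ℕ} (hp : p.Prime) (M : ℕ) :
    ‖∑ m ∈ Icc 1 M, (u (p * m) - u p * u m) • b m‖ ≤ M / p * (2 * B) := by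
  have hB : 0 ≤ B := (norm_nonneg _).trans (hb 0)
  have hdefect (m : ℕ) : ‖u (p * m) - u p * u m‖ ≤ 2 := calc
    _ ≤ ‖u (p * m)‖ + ‖u p‖ * ‖u m‖ := (norm_sub_le _ _).trans_eq (by rw [norm_mul])
    _ ≤ 1 + 1 * 1 := by
      gcongr
      exacts [hu _, hu _, hu _]
    _ = 2 := by norm_num
  have hsupp : ∑ m ∈ Icc 1 M, (u (p * m) - u p * u m) • b m =
      ∑ m ∈ Icc 1 M with p ∣ m, (u (p * m) - u p * u m) • b m := by
    refine (sum_filter_of_ne fun m _ hm => ?_).symm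
    by_contra hpm
    rw [hmult p m ((Nat.Prime.coprime_iff_not_dvd hp).2 hpm), sub_self, zero_smul] at hm
    exact hm rfl
  rw [hsupp, sum_filter_dvd_Icc]
  calc _ ≤ ∑ m ∈ Icc 1 (M / p), 2 * B := by
        refine norm_sum_le_of_le _ fun m _ => ?_
        rw [norm_smul]
        exact mul_le_mul (hdefect _) (hb _) (norm_nonneg _) zero_le_two
    _ = (M / p : ℕ) * (2 * B) := by
        rw [sum_const, Nat.card_Icc, add_tsub_cancel_right, nsmul_eq_mul]
    _ ≤ M / p * (2 * B) := by
        gcongr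
        exact Nat.cast_div_le

theorem norm_sum_primes_multiplicative_defect_le [NormedSpace 𝕜 E] {a : ℕ → E} {u : ℕ → 𝕜}
    {B : ℝ} (ha : ∀ n, ‖a n‖ ≤ B) (hu : ∀ n, ‖u n‖ ≤ 1)
    (hmult : ∀ m n, Nat.Coprime m n → u (m * n) = u m * u n)
    {P : Finset ℕ} (hP : ∀ p ∈ P, p.Prime) {K : ℕ} (hK : 0 < K) (hPK : ∀ p ∈ P, K ≤ p) (N : ℕ) :
    ‖∑ p ∈ P, ∑ m ∈ Icc 1 (N / p), (u (p * m) - u p * u m) • a (p * m)‖ ≤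
      N * (2 * B / K * reciprocalSum P) := by
  have hB : 0 ≤ B := (norm_nonneg _).trans (ha 0)
  calc _ ≤ ∑ p ∈ P, ((N / p : ℕ) : ℝ) / K * (2 * B) := by
        refine norm_sum_le_of_le _ fun p hp =>
          (norm_sum_multiplicative_defect_le hu hmult (fun m => ha (p * m)) (hP p hp) _).trans ?_
        gcongr
        exact hPK p hp
    _ ≤ N * reciprocalSum P / K * (2 * B) := by
        rw [← sum_mul, ← sum_div]
        gcongr
        exact sum_natCast_div_le P N
    _ = N * (2 * B / K * reciprocalSum P) := by ring

variable [InnerProductSpace 𝕜 E]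

theorem reciprocalSum_mul_norm_sum_smul_le {a : ℕ → E} {u : ℕ → 𝕜} {B ε : ℝ}
    (ha : ∀ n, ‖a n‖ ≤ B) (hu : ∀ n, ‖u n‖ ≤ 1)
    (hmult : ∀ m n, Nat.Coprime m n → u (m * n) = u m * u n) (hε : 0 ≤ ε)
    {P : Finset ℕ} (hP : ∀ p ∈ P, p.Prime) {K : ℕ} (hK : 0 < K) (hPK : ∀ p ∈ P, K ≤ p)
    {N : ℕ} (hN : 2 * #P ≤ N) (hcorr : ∀ p ∈ P, ∀ q ∈ P, p ≠ q →
      ‖dilationCorrelation 𝕜 a p q (N / max p q)‖ ≤ ε * (N / max p q : ℕ)) :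
    reciprocalSum P * ‖∑ n ∈ Icc 1 N, u n • a n‖ ≤
      N * (B * √(2 * reciprocalSum P)) + N * (2 * B / K * reciprocalSum P) +
        N * (4 * B + 2 * √ε * reciprocalSum P) := by
  have hcoprime : (P : Set ℕ).Pairwise Nat.Coprime := fun p hp q hq =>
    (Nat.coprime_primes (hP p hp) (hP q hq)).2
  have hua (n : ℕ) : ‖u n • a n‖ ≤ B := by
    rw [norm_smul]
    exact (mul_le_of_le_one_left (norm_nonneg _) (hu n)).trans (ha n)
  have hsplit : (reciprocalSum P : 𝕜) • ∑ n ∈ Icc 1 N, u n • a n =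
      ((reciprocalSum P : 𝕜) • ∑ n ∈ Icc 1 N, u n • a n -
          ∑ p ∈ P, ∑ m ∈ Icc 1 (N / p), u (p * m) • a (p * m)) +
        ∑ p ∈ P, ∑ m ∈ Icc 1 (N / p), (u (p * m) - u p * u m) • a (p * m) +
        ∑ p ∈ P, ∑ m ∈ Icc 1 (N / p), (u p * u m) • a (p * m) := by
    simp only [sub_smul, sum_sub_distrib]
    abel
  calc _ = ‖(reciprocalSum P : 𝕜) • ∑ n ∈ Icc 1 N, u n • a n‖ := by
        rw [norm_smul, RCLike.norm_of_nonneg (reciprocalSum_nonneg P)]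
    _ ≤ _ := by
        rw [hsplit]
        exact norm_add_le_of_le
          (norm_add_le_of_le (norm_reciprocalSum_smul_sum_sub_le hcoprime hN hua)
            (norm_sum_primes_multiplicative_defect_le ha hu hmult hP hK hPK N))
          (norm_bilinear_sum_le ha hu hu hε (fun p hp => (hP p hp).ne_zero) hcorr)

theorem exists_primes_le_reciprocalSum (K : ℕ) (C : ℝ) :
    ∃ P : Finset ℕ, (∀ p ∈ P, p.Prime) ∧ (∀ p ∈ P, K ≤ p) ∧ C ≤ reciprocalSum P := by
  let f : ℕ → ℝ := {p : ℕ | p.Prime}.indicator fun n => 1 / n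
  have hf (n : ℕ) : 0 ≤ f n := Set.indicator_nonneg (fun _ _ => by positivity) n
  have hdiv := (not_summable_iff_tendsto_nat_atTop_of_nonneg hf).1 not_summable_one_div_on_primes
  obtain ⟨n, hn, hKn⟩ := ((hdiv.eventually_ge_atTop (∑ p ∈ range K, f p + C)).and
    (eventually_ge_atTop K)).exists
  refine ⟨{p ∈ Ico K n | p.Prime}, fun p hp => (mem_filter.1 hp).2,
    fun p hp => (mem_Ico.1 (mem_filter.1 hp).1).1, ?_⟩
  rw [← sum_range_add_sum_Ico _ hKn] at hn
  refine (le_of_add_le_add_left hn).trans_eq ?_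
  simp only [f, reciprocalSum, sum_filter, Set.indicator_apply, Set.mem_ofPred_eq, one_div]

theorem eventually_norm_dilationCorrelation_div_max_le {a : ℕ → E} {ε : ℝ} {P : Finset ℕ}
    (hP : ∀ p ∈ P, p ≠ 0) (hcorr : ∀ p ∈ P, ∀ q ∈ P, p ≠ q →
      ∀ᶠ M : ℕ in atTop, ‖dilationCorrelation 𝕜 a p q M‖ ≤ ε * M) :
    ∀ᶠ N : ℕ in atTop, ∀ p ∈ P, ∀ q ∈ P, p ≠ q →
      ‖dilationCorrelation 𝕜 a p q (N / max p q)‖ ≤ ε * (N / max p q : ℕ) := by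
  refine (eventually_all_finset P).2 fun p hp => (eventually_all_finset P).2 fun q hq =>
    eventually_imp_distrib_left.2 fun hpq => ?_
  have hmax : max p q ≠ 0 := ((Nat.pos_of_ne_zero (hP p hp)).trans_le (le_max_left p q)).ne'
  exact (Nat.tendsto_div_const_atTop hmax).eventually (hcorr p hp q hq hpq)

/-- The constants come from the choice `ε = δ ^ 2`, `K ≥ δ⁻¹`, `reciprocalSum P ≥ δ⁻²`. -/
theorem eventually_norm_sum_smul_le {a : ℕ → E} {u : ℕ → 𝕜} {B : ℝ} (ha : ∀ n, ‖a n‖ ≤ B)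
    (hu : ∀ n, ‖u n‖ ≤ 1) (hmult : ∀ m n, Nat.Coprime m n → u (m * n) = u m * u n)
    (hcorr : ∀ ε > (0 : ℝ), ∃ K : ℕ, ∀ p q : ℕ, p.Prime → q.Prime → p ≠ q → K ≤ p → K ≤ q →
      ∀ᶠ M : ℕ in atTop, ‖dilationCorrelation 𝕜 a p q M‖ ≤ ε * M)
    {δ : ℝ} (hδ : 0 < δ) (hδ' : δ ≤ 1) :
    ∀ᶠ N : ℕ in atTop, ‖∑ n ∈ Icc 1 N, u n • a n‖ ≤ (8 * B + 2) * δ * N := by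
  have hB : 0 ≤ B := (norm_nonneg _).trans (ha 0)
  obtain ⟨K₁, hK₁⟩ := hcorr (δ ^ 2) (by positivity)
  obtain ⟨K₂, hK₂⟩ := exists_nat_ge δ⁻¹
  obtain ⟨P, hP, hPK, hA⟩ := exists_primes_le_reciprocalSum (max K₁ K₂) (δ⁻¹ ^ 2)
  have hK₂_pos : (0 : ℝ) < K₂ := (inv_pos.2 hδ).trans_le hK₂
  have hA_pos : 0 < reciprocalSum P := (by positivity : 0 < δ⁻¹ ^ 2).trans_le hA
  have hδA : 1 ≤ δ ^ 2 * reciprocalSum P := by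
    rwa [inv_pow, inv_le_iff_one_le_mul₀' (by positivity)] at hA
  have hsqrt : √(2 * reciprocalSum P) ≤ 2 * (δ * reciprocalSum P) := by
    rw [Real.sqrt_le_left (by positivity)]
    calc 2 * reciprocalSum P ≤ 4 * reciprocalSum P * (δ ^ 2 * reciprocalSum P) := by nlinarith
      _ = (2 * (δ * reciprocalSum P)) ^ 2 := by ring
  have hK₁P : ∀ p ∈ P, ∀ q ∈ P, p ≠ q →
      ∀ᶠ M : ℕ in atTop, ‖dilationCorrelation 𝕜 a p q M‖ ≤ δ ^ 2 * M := fun p hp q hq hpq =>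
    hK₁ p q (hP p hp) (hP q hq) hpq ((le_max_left _ _).trans (hPK p hp))
      ((le_max_left _ _).trans (hPK q hq))
  have hinv : (K₂ : ℝ)⁻¹ ≤ δ := inv_le_of_inv_le₀ hδ hK₂
  have hone : 1 ≤ δ * reciprocalSum P := hδA.trans
    (mul_le_mul_of_nonneg_right (pow_le_of_le_one hδ.le hδ' two_ne_zero) hA_pos.le)
  filter_upwards [eventually_norm_dilationCorrelation_div_max_le (fun p hp => (hP p hp).ne_zero)
    hK₁P, eventually_ge_atTop (2 * #P)] with N hNcorr hN
  refine le_of_mul_le_mul_left ?_ hA_pos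
  calc reciprocalSum P * ‖∑ n ∈ Icc 1 N, u n • a n‖
      ≤ N * (B * √(2 * reciprocalSum P)) + N * (2 * B / K₂ * reciprocalSum P) +
          N * (4 * B + 2 * √(δ ^ 2) * reciprocalSum P) :=
        reciprocalSum_mul_norm_sum_smul_le ha hu hmult (sq_nonneg δ) hP
          (Nat.cast_pos.1 hK₂_pos) (fun p hp => (le_max_right _ _).trans (hPK p hp)) hN hNcorr
    _ ≤ N * (B * (2 * (δ * reciprocalSum P))) + N * (2 * B * δ * reciprocalSum P) +
          N * (4 * B * (δ * reciprocalSum P) + 2 * δ * reciprocalSum P) := by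
        have h4B : 4 * B ≤ 4 * B * (δ * reciprocalSum P) :=
          le_mul_of_one_le_right (by positivity) hone
        rw [Real.sqrt_sq hδ.le, div_eq_mul_inv (2 * B)]
        gcongr
    _ = reciprocalSum P * ((8 * B + 2) * δ * N) := by ring

/-- The **Kátai–Bourgain–Sarnak–Ziegler criterion**. -/
theorem isLittleO_sum_smul_of_multiplicative {a : ℕ → E} {u : ℕ → 𝕜} {B : ℝ}
    (ha : ∀ n, ‖a n‖ ≤ B) (hu : ∀ n, ‖u n‖ ≤ 1)
    (hmult : ∀ m n, Nat.Coprime m n → u (m * n) = u m * u n)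
    (hcorr : ∀ ε > (0 : ℝ), ∃ K : ℕ, ∀ p q : ℕ, p.Prime → q.Prime → p ≠ q → K ≤ p → K ≤ q →
      ∀ᶠ M : ℕ in atTop, ‖dilationCorrelation 𝕜 a p q M‖ ≤ ε * M) :
    (fun N : ℕ => ∑ n ∈ Icc 1 N, u n • a n) =o[atTop] fun N : ℕ => (N : 𝕜) := by
  have hB : 0 < 8 * B + 2 := by linarith [(norm_nonneg _).trans (ha 0)]
  refine Asymptotics.IsLittleO.of_bound fun c hc => ?_
  have hδ : 0 < min 1 (c / (8 * B + 2)) := lt_min one_pos (by positivity)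
  filter_upwards [eventually_norm_sum_smul_le ha hu hmult hcorr hδ (min_le_left _ _)] with N hN
  rw [RCLike.norm_natCast]
  refine hN.trans (mul_le_mul_of_nonneg_right ?_ N.cast_nonneg)
  calc (8 * B + 2) * min 1 (c / (8 * B + 2)) ≤ (8 * B + 2) * (c / (8 * B + 2)) := by
        gcongr
        exact min_le_right _ _
    _ = c := mul_div_cancel₀ _ hB.ne'

end MultiplicativeSums

section ErgodicOptimization

variable {Z : Type*} [MeasurableSpace Z]

/-- The probability measures preserved by `R`. -/
def invariantMeasures (R : Z → Z) : Set (ProbabilityMeasure Z) :=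
  {ρ | MeasurePreserving R (ρ : Measure Z) ρ}

variable [TopologicalSpace Z]

/-- The functional `g ↦ ∫ g ∂ρ` on bounded continuous functions. It embeds the probability
measures in a locally convex space, where the Krein–Milman theorem applies. -/
noncomputable def integralFunctional (ρ : ProbabilityMeasure Z) : (Z →ᵇ ℝ) → ℝ :=
  fun g => ∫ z, g z ∂(ρ : Measure Z)

variable [BorelSpace Z] {R : Z → Z}

theorem continuous_integralFunctional :
    Continuous (integralFunctional : ProbabilityMeasure Z → (Z →ᵇ ℝ) → ℝ) :=
  continuous_pi fun g => continuous_iff_continuousAt.2 fun _ =>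
    ProbabilityMeasure.tendsto_iff_forall_integral_tendsto.1 tendsto_id g

variable [HasOuterApproxClosed Z]

theorem integralFunctional_injective :
    Function.Injective (integralFunctional : ProbabilityMeasure Z → (Z →ᵇ ℝ) → ℝ) :=
  fun ρ₁ ρ₂ h => Subtype.ext <| ext_of_forall_integral_eq_of_IsFiniteMeasure
    (μ := (ρ₁ : Measure Z)) (ν := (ρ₂ : Measure Z)) (congrFun h)

theorem isClosed_invariantMeasures (hR : Continuous R) : IsClosed (invariantMeasures R) := by
  have : invariantMeasures R = {ρ | ρ.map hR.measurable.aemeasurable = ρ} := by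
    ext ρ
    exact ⟨fun hρ => Subtype.ext hρ.map_eq, fun hρ => ⟨hR.measurable, congrArg Subtype.val hρ⟩⟩
  rw [this]
  exact isClosed_eq (ProbabilityMeasure.continuous_map hR) continuous_id

theorem ergodic_of_integralFunctional_mem_extremePoints {ρ : ProbabilityMeasure Z}
    (hρ : integralFunctional ρ ∈ (integralFunctional '' invariantMeasures R).extremePoints ℝ) :
    Ergodic R (ρ : Measure Z) := by
  obtain ⟨⟨ρ', hρ', hρρ'⟩, hext⟩ := mem_extremePoints_iff_left.1 hρ
  obtain rfl : ρ' = ρ := integralFunctional_injective hρρ'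
  refine .of_mem_extremePoints (mem_extremePoints_iff_left.2 ⟨⟨hρ', inferInstance⟩, ?_⟩)
  rintro ν₁ ⟨hν₁, hprob₁⟩ ν₂ ⟨hν₂, hprob₂⟩ ⟨a, b, ha, hb, hab, hsum⟩
  have ha_top : a ≠ ∞ := fun h => by simp [h] at hab
  have hb_top : b ≠ ∞ := fun h => by simp [h] at hab
  refine congrArg Subtype.val (a₁ := (⟨ν₁, hprob₁⟩ : ProbabilityMeasure Z))
    (integralFunctional_injective (hext _ ⟨_, hν₁, rfl⟩ _ ⟨⟨ν₂, hprob₂⟩, hν₂, rfl⟩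
      ⟨a.toReal, b.toReal, ENNReal.toReal_pos ha.ne' ha_top, ENNReal.toReal_pos hb.ne' hb_top,
        by rw [← ENNReal.toReal_add ha_top hb_top, hab, ENNReal.toReal_one], ?_⟩))
  funext g
  change a.toReal * ∫ z, g z ∂ν₁ + b.toReal * ∫ z, g z ∂ν₂ = ∫ z, g z ∂(ρ' : Measure Z)
  rw [← hsum, integral_add_measure ((g.integrable ν₁).smul_measure ha_top)
    ((g.integrable ν₂).smul_measure hb_top), integral_smul_measure, integral_smul_measure,
    smul_eq_mul, smul_eq_mul]

variable [CompactSpace Z] [T2Space Z]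

theorem exists_ergodic_isMaxOn (hR : Continuous R) (h : Z →ᵇ ℝ)
    (hne : (invariantMeasures R).Nonempty) :
    ∃ ρ : ProbabilityMeasure Z, Ergodic R (ρ : Measure Z) ∧
      IsMaxOn (fun ρ : ProbabilityMeasure Z => ∫ z, h z ∂(ρ : Measure Z))
        (invariantMeasures R) ρ := by
  set K : Set ((Z →ᵇ ℝ) → ℝ) := integralFunctional '' invariantMeasures R
  have hK : IsCompact K :=
    (isClosed_invariantMeasures hR).isCompact.image continuous_integralFunctional
  let evalAt : StrongDual ℝ ((Z →ᵇ ℝ) → ℝ) := ContinuousLinearMap.proj h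
  have hface : IsExposed ℝ K (evalAt.toExposed K) := ContinuousLinearMap.toExposed.isExposed
  have hface_ne : (evalAt.toExposed K).Nonempty := by
    obtain ⟨x, hx, hmax⟩ := hK.exists_isMaxOn (hne.image _) evalAt.continuous.continuousOn
    exact ⟨x, hx, fun y hy => hmax hy⟩
  obtain ⟨x, hx⟩ := (hface.isCompact hK).extremePoints_nonempty hface_ne
  have hxK : x ∈ K.extremePoints ℝ := hface.isExtreme.extremePoints_subset_extremePoints hx
  obtain ⟨ρ, -, rfl⟩ := hxK.1
  exact ⟨ρ, ergodic_of_integralFunctional_mem_extremePoints hxK,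
    fun ρ' hρ' => hx.1.2 _ ⟨ρ', hρ', rfl⟩⟩

theorem norm_integral_le_of_forall_ergodic {E : Type*} [NormedAddCommGroup E] [NormedSpace ℝ E]
    [CompleteSpace E] (hR : Continuous R) {F : Z → E} (hF : Continuous F) {c : ℝ}
    (hc : ∀ ρ : ProbabilityMeasure Z, Ergodic R (ρ : Measure Z) →
      ‖∫ z, F z ∂(ρ : Measure Z)‖ ≤ c)
    {ρ : ProbabilityMeasure Z} (hρ : ρ ∈ invariantMeasures R) :
    ‖∫ z, F z ∂(ρ : Measure Z)‖ ≤ c := by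
  have hint (σ : ProbabilityMeasure Z) : Integrable F (σ : Measure Z) :=
    hF.integrable_of_hasCompactSupport (HasCompactSupport.of_compactSpace F)
  obtain ⟨l, hl, hlρ⟩ := exists_dual_vector'' ℝ (∫ z, F z ∂(ρ : Measure Z))
  obtain ⟨σ, hσ, hmax⟩ := exists_ergodic_isMaxOn hR
    (.mkOfCompact ⟨fun z => l (F z), l.continuous.comp hF⟩) ⟨ρ, hρ⟩
  calc ‖∫ z, F z ∂(ρ : Measure Z)‖ = ∫ z, l (F z) ∂(ρ : Measure Z) := by
        rw [l.integral_comp_comm (hint ρ), hlρ]; rfl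
    _ ≤ ∫ z, l (F z) ∂(σ : Measure Z) := hmax hρ
    _ = l (∫ z, F z ∂(σ : Measure Z)) := l.integral_comp_comm (hint σ)
    _ ≤ ‖∫ z, F z ∂(σ : Measure Z)‖ := (le_abs_self _).trans (l.le_of_opNorm_le_of_le hl le_rfl
        |>.trans_eq (one_mul _))
    _ ≤ c := hc σ hσ

end ErgodicOptimization

section EmpiricalMeasures

variable {Z : Type*} [MeasurableSpace Z] {𝕜 : Type*} [RCLike 𝕜] {R : Z → Z}

/-- The uniform probability measure on the first `N + 1` points of the `R`-orbit of `z`; the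
shift by one keeps the total mass equal to `1` for `N = 0`. -/
noncomputable def empiricalMeasure (R : Z → Z) (z : Z) (N : ℕ) : ProbabilityMeasure Z :=
  ⟨((N + 1 : ℕ) : ℝ≥0∞)⁻¹ • ∑ n ∈ Finset.range (N + 1), Measure.dirac (R^[n] z), ⟨by
    rw [Measure.smul_apply, Measure.coe_finsetSum, Finset.sum_apply]
    simp only [measure_univ, Finset.sum_const, Finset.card_range, nsmul_one, smul_eq_mul]
    exact ENNReal.inv_mul_cancel (by positivity) (ENNReal.natCast_ne_top _)⟩⟩

variable [TopologicalSpace Z] [BorelSpace Z]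

theorem integral_empiricalMeasure (g : Z →ᵇ 𝕜) (z : Z) (N : ℕ) :
    ∫ w, g w ∂(empiricalMeasure R z N : Measure Z) = birkhoffAverage 𝕜 R g (N + 1) z := by
  have hg : StronglyMeasurable g := g.continuous.stronglyMeasurable
  change ∫ w, g w ∂(((N + 1 : ℕ) : ℝ≥0∞)⁻¹ •
    ∑ n ∈ Finset.range (N + 1), Measure.dirac (R^[n] z)) = _
  rw [integral_smul_measure, integral_finsetSum_measure fun n _ => g.integrable _,
    Finset.sum_congr rfl fun n _ => integral_dirac' _ _ hg, birkhoffAverage, birkhoffSum,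
    ENNReal.toReal_inv, ENNReal.toReal_natCast, RCLike.real_smul_eq_coe_smul (K := 𝕜),
    RCLike.ofReal_inv, RCLike.ofReal_natCast]

variable [HasOuterApproxClosed Z]

theorem mem_invariantMeasures_of_tendsto_empiricalMeasure (hR : Continuous R) {z : Z}
    {l : Filter ℕ} [l.NeBot] (hl : l ≤ atTop) {ρ : ProbabilityMeasure Z}
    (hρ : Tendsto (empiricalMeasure R z) l (𝓝 ρ)) : ρ ∈ invariantMeasures R := by
  refine ⟨hR.measurable, ?_⟩
  have := Measure.isProbabilityMeasure_map (μ := (ρ : Measure Z)) hR.measurable.aemeasurable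
  refine ext_of_forall_integral_eq_of_IsFiniteMeasure fun g => ?_
  rw [integral_map hR.measurable.aemeasurable g.continuous.aestronglyMeasurable]
  have hlim (g : Z →ᵇ ℝ) : Tendsto (fun N => birkhoffAverage ℝ R g (N + 1) z) l
      (𝓝 (∫ w, g w ∂(ρ : Measure Z))) := by
    simpa only [integral_empiricalMeasure] using
      ProbabilityMeasure.tendsto_iff_forall_integral_tendsto.1 hρ g
  have hshift (N : ℕ) :
      birkhoffAverage ℝ R (g ∘ R) (N + 1) z = birkhoffAverage ℝ R g (N + 1) (R z) := by
    simp only [birkhoffAverage, birkhoffSum, Function.comp_apply, ← Function.iterate_succ_apply,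
      Function.iterate_succ_apply']
  have hdiff : Tendsto (fun N => birkhoffAverage ℝ R g (N + 1) (R z) -
      birkhoffAverage ℝ R g (N + 1) z) l (𝓝 0) :=
    ((tendsto_add_atTop_iff_nat 1).2 (tendsto_birkhoffAverage_apply_sub_birkhoffAverage' ℝ
      g.isBounded_range R z)).mono_left hl
  have hlim_comp := (hlim (g.compContinuous ⟨R, hR⟩)).sub (hlim g)
  refine sub_eq_zero.1 (tendsto_nhds_unique hlim_comp (hdiff.congr fun N => ?_))
  rw [← hshift]
  rfl

theorem eventually_norm_birkhoffAverage_le [CompactSpace Z] [T2Space Z] (hR : Continuous R)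
    {F : Z → 𝕜} (hF : Continuous F) {c c' : ℝ} (hcc' : c < c')
    (hc : ∀ ρ : ProbabilityMeasure Z, Ergodic R (ρ : Measure Z) →
      ‖∫ z, F z ∂(ρ : Measure Z)‖ ≤ c) (z : Z) :
    ∀ᶠ N : ℕ in atTop, ‖birkhoffAverage 𝕜 R F N z‖ ≤ c' := by
  rw [← map_add_atTop_eq_nat 1, eventually_map]
  by_contra hcon
  rw [not_eventually] at hcon
  have := frequently_iff_neBot.1 hcon
  obtain ⟨U, hU⟩ := Ultrafilter.exists_le
    (atTop ⊓ 𝓟 {N | ¬ ‖birkhoffAverage 𝕜 R F (N + 1) z‖ ≤ c'})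
  have hlarge : ∀ᶠ N in (U : Filter ℕ), c' ≤ ‖birkhoffAverage 𝕜 R F (N + 1) z‖ :=
    mem_of_superset (hU.trans inf_le_right (mem_principal_self _)) fun N hN => (not_le.1 hN).le
  obtain ⟨ρ, -, hρ : Tendsto (empiricalMeasure R z) U (𝓝 ρ)⟩ :=
    isCompact_univ.ultrafilter_le_nhds (U.map (empiricalMeasure R z)) (by simp)
  have hρ_inv : ρ ∈ invariantMeasures R :=
    mem_invariantMeasures_of_tendsto_empiricalMeasure hR (hU.trans inf_le_left) hρ
  have hlim : Tendsto (fun N => birkhoffAverage 𝕜 R F (N + 1) z) U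
      (𝓝 (∫ w, F w ∂(ρ : Measure Z))) := by
    have := (ProbabilityMeasure.tendsto_iff_forall_integral_rclike_tendsto 𝕜).1 hρ
      (.mkOfCompact ⟨F, hF⟩)
    simp only [integral_empiricalMeasure] at this
    exact this
  exact (ge_of_tendsto hlim.norm hlarge).not_gt
    ((norm_integral_le_of_forall_ergodic hR hF hc hρ_inv).trans_lt hcc')

end EmpiricalMeasures

section Factors

variable {A B : Type*} [MeasurableSpace A] {ρ : Measure A} {R : A → A} {Q : B → B} {π : A → B}

theorem ae_semiconj_iterate (hR : MeasurePreserving R ρ ρ)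
    (hsemi : ∀ᵐ a ∂ρ, π (R a) = Q (π a)) (n : ℕ) : ∀ᵐ a ∂ρ, π (R^[n] a) = Q^[n] (π a) := by
  induction n with
  | zero => simp
  | succ n ih =>
    filter_upwards [hsemi, hR.quasiMeasurePreserving.ae ih] with a ha ih_Ra
    rw [Function.iterate_succ_apply, Function.iterate_succ_apply, ih_Ra, ha]

variable [MeasurableSpace B]

theorem map_map_eq_of_ae_leftInverse {θ : B → A} (hπ : Measurable π) (hθ : Measurable θ)
    (h : ∀ᵐ a ∂ρ, θ (π a) = a) : (ρ.map π).map θ = ρ := by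
  rw [Measure.map_map hθ hπ, Measure.map_congr (f := θ ∘ π) (g := id) h, Measure.map_id]

theorem ergodic_map_of_ae_semiconj (hR : Ergodic R ρ) (hπ : Measurable π) (hQ : Measurable Q)
    (hsemi : ∀ᵐ a ∂ρ, π (R a) = Q (π a)) : Ergodic Q (ρ.map π) := by
  have hinv : (ρ.map π).map Q = ρ.map π := calc
    (ρ.map π).map Q = ρ.map (Q ∘ π) := Measure.map_map hQ hπ
    _ = ρ.map (π ∘ R) := Measure.map_congr (hsemi.mono fun _ ha => ha.symm)
    _ = (ρ.map R).map π := (Measure.map_map hπ hR.measurable).symm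
    _ = ρ.map π := by rw [hR.map_eq]
  refine ⟨⟨hQ, hinv⟩, ⟨fun {s} hs hQs => ?_⟩⟩
  have hpre : R ⁻¹' (π ⁻¹' s) =ᵐ[ρ] π ⁻¹' s := by
    filter_upwards [hsemi] with a ha
    change (π (R a) ∈ s) = (π a ∈ s)
    rw [ha, ← Set.mem_preimage, hQs]
  rw [eventuallyConst_set]
  exact (hR.quasiErgodic.ae_mem_or_ae_notMem₀ (hπ hs).nullMeasurableSet hpre).imp
    (ae_map_iff hπ.aemeasurable hs).2 (ae_map_iff hπ.aemeasurable hs.compl).2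

end Factors

section JoiningFactors

variable {A₁ A₂ B₁ B₂ : Type*} [MeasurableSpace A₁] [MeasurableSpace A₂] [MeasurableSpace B₁]
  [MeasurableSpace B₂] {κ : Measure (A₁ × A₂)} {ρ₁ : Measure A₁} {ρ₂ : Measure A₂}
  {π₁ : A₁ → B₁} {π₂ : A₂ → B₂}

theorem measurePreserving_fst_map_prodMap {σ₁ : Measure B₁}
    (hκ : MeasurePreserving Prod.fst κ ρ₁) (hπ₁ : MeasurePreserving π₁ ρ₁ σ₁)
    (hπ₂ : Measurable π₂) : MeasurePreserving Prod.fst (κ.map (Prod.map π₁ π₂)) σ₁ := by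
  refine ⟨measurable_fst, ?_⟩
  rw [Measure.map_map measurable_fst (hπ₁.measurable.prodMap hπ₂)]
  exact (hπ₁.comp hκ).map_eq

theorem measurePreserving_snd_map_prodMap {σ₂ : Measure B₂}
    (hκ : MeasurePreserving Prod.snd κ ρ₂) (hπ₁ : Measurable π₁)
    (hπ₂ : MeasurePreserving π₂ ρ₂ σ₂) :
    MeasurePreserving Prod.snd (κ.map (Prod.map π₁ π₂)) σ₂ := by
  refine ⟨measurable_snd, ?_⟩
  rw [Measure.map_map measurable_snd (hπ₁.prodMap hπ₂.measurable)]
  exact (hπ₂.comp hκ).map_eq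

theorem ergodic_prodMap_map_prodMap {R₁ : A₁ → A₁} {R₂ : A₂ → A₂} {Q₁ : B₁ → B₁} {Q₂ : B₂ → B₂}
    (hκ : Ergodic (Prod.map R₁ R₂) κ) (hκ_fst : MeasurePreserving Prod.fst κ ρ₁)
    (hκ_snd : MeasurePreserving Prod.snd κ ρ₂) (hπ₁ : Measurable π₁) (hπ₂ : Measurable π₂)
    (hQ₁ : Measurable Q₁) (hQ₂ : Measurable Q₂) (hsemi₁ : ∀ᵐ a ∂ρ₁, π₁ (R₁ a) = Q₁ (π₁ a))
    (hsemi₂ : ∀ᵐ a ∂ρ₂, π₂ (R₂ a) = Q₂ (π₂ a)) :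
    Ergodic (Prod.map Q₁ Q₂) (κ.map (Prod.map π₁ π₂)) := by
  refine ergodic_map_of_ae_semiconj hκ (hπ₁.prodMap hπ₂) (hQ₁.prodMap hQ₂) ?_
  filter_upwards [hκ_fst.quasiMeasurePreserving.ae hsemi₁,
    hκ_snd.quasiMeasurePreserving.ae hsemi₂] with p hp₁ hp₂
  exact Prod.ext hp₁ hp₂

end JoiningFactors

section UniqueErgodicity

variable {Y : Type*} [MeasurableSpace Y] {S : Y → Y} {ν : Measure Y} {r : ℕ}

theorem map_sum_range_map_iterate {ρ : Measure Y} (hS : Measurable S)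
    (hρ : MeasurePreserving S^[r] ρ ρ) :
    (∑ n ∈ Finset.range r, ρ.map S^[n]).map S = ∑ n ∈ Finset.range r, ρ.map S^[n] := by
  have hstep (n : ℕ) : (ρ.map S^[n]).map S = ρ.map S^[n + 1] := by
    rw [Measure.map_map hS (hS.iterate n), ← Function.iterate_succ']
  have hends : ρ.map S^[0] = ρ.map S^[r] := by simp [hρ.map_eq]
  rw [← Measure.mapₗ_apply_of_measurable hS, map_sum]
  simp only [Measure.mapₗ_apply_of_measurable hS, hstep]
  cases r with
  | zero => rfl
  | succ k => rw [Finset.sum_range_succ' (fun n => ρ.map S^[n]), hends,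
      ← Finset.sum_range_succ (fun n => ρ.map S^[n + 1])]

theorem UniquelyErgodicWith.iterate (huniq : UniquelyErgodicWith S ν) (hS : Measurable S)
    (hr : r ≠ 0) (herg : Ergodic S^[r] ν) : UniquelyErgodicWith S^[r] ν := by
  have := huniq.1
  refine ⟨huniq.1, herg.map_eq, fun ρ hρ_prob hρ_inv => ?_⟩
  have hρ : MeasurePreserving S^[r] ρ ρ := ⟨hS.iterate r, hρ_inv⟩
  set σ := ∑ n ∈ Finset.range r, ρ.map S^[n]
  have hσ_univ : σ Set.univ = r := by
    simp [σ, Measure.map_apply (hS.iterate _) MeasurableSet.univ]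
  have hσ : (r : ℝ≥0∞)⁻¹ • σ = ν := by
    refine huniq.2.2 _ ⟨?_⟩ ?_
    · rw [Measure.smul_apply, hσ_univ, smul_eq_mul,
        ENNReal.inv_mul_cancel (Nat.cast_ne_zero.2 hr) (ENNReal.natCast_ne_top r)]
    · rw [Measure.map_smul, map_sum_range_map_iterate hS hρ]
  have hρσ : ρ ≤ σ := by
    conv_lhs => rw [← Measure.map_id (μ := ρ)]
    exact Finset.single_le_sum (f := fun n => ρ.map S^[n]) (fun _ _ => Measure.zero_le _)
      (Finset.mem_range.2 (Nat.pos_of_ne_zero hr))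
  refine herg.eq_of_absolutelyContinuous hρ (hσ ▸ ?_)
  exact hρσ.absolutelyContinuous.trans
    (Measure.absolutelyContinuous_smul (ENNReal.inv_ne_zero.2 (ENNReal.natCast_ne_top r)))

theorem UniquelyErgodicWith.map_eq_of_semiconj {Z : Type*} [MeasurableSpace Z]
    (huniq : UniquelyErgodicWith S ν) (hS : Measurable S) {R : Z → Z} {ρ : Measure Z}
    [IsProbabilityMeasure ρ] (hρ : MeasurePreserving R ρ ρ) {π : Z → Y} (hπ : Measurable π)
    (hsemi : Function.Semiconj π R S) : ρ.map π = ν := by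
  refine huniq.2.2 _ (Measure.isProbabilityMeasure_map hπ.aemeasurable) ?_
  rw [Measure.map_map hS hπ, ← hsemi.comp_eq, ← Measure.map_map hπ hρ.measurable, hρ.map_eq]

end UniqueErgodicity

section IsomorphismInvariance

variable {X Y : Type*} [MeasurableSpace X] [MeasurableSpace Y] {T : X → X} {μ : Measure X}
  {S : Y → Y} {ν : Measure Y}

theorem TotallyErgodic.ergodic (hT : TotallyErgodic T μ) : Ergodic T μ := hT 1 one_ne_zero

theorem TotallyErgodic.of_measureIso (hT : TotallyErgodic T μ) (hS : Measurable S)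
    (hiso : MeasureIso T μ S ν) : TotallyErgodic S ν := by
  obtain ⟨φ, -, hφ, -, rfl, -, -, hsemi⟩ := hiso
  exact fun m hm => ergodic_map_of_ae_semiconj (hT m hm) hφ (hS.iterate m)
    (ae_semiconj_iterate hT.ergodic.toMeasurePreserving hsemi m)

theorem MeasureIso.symm (hiso : MeasureIso T μ S ν) (hT : MeasurePreserving T μ μ) :
    MeasureIso S ν T μ := by
  obtain ⟨φ, ψ, hφ, hψ, rfl, hψφ, hφψ, hsemi⟩ := hiso
  have hmap : (μ.map φ).map ψ = μ := map_map_eq_of_ae_leftInverse hφ hψ hψφ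
  have hψ_mp : MeasurePreserving ψ (μ.map φ) μ := ⟨hψ, hmap⟩
  refine ⟨ψ, φ, hψ, hφ, hmap, hφψ, hψφ, ?_⟩
  filter_upwards [hφψ, hψ_mp.quasiMeasurePreserving.ae hsemi,
    hψ_mp.quasiMeasurePreserving.ae (hT.quasiMeasurePreserving.ae hψφ)] with y hy hsemi_y hTy
  rw [hy] at hsemi_y
  rw [← hsemi_y, hTy]

theorem AOP.of_measureIso (hAOP : AOP T μ) (hT : MeasurePreserving T μ μ)
    (hS : MeasurePreserving S ν ν) (hiso : MeasureIso T μ S ν) : AOP S ν := by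
  obtain ⟨ψ, φ, hψ, hφ, hνψ, hφψ, -, hsemi⟩ := hiso.symm hT
  have hψ_mp : MeasurePreserving ψ ν μ := ⟨hψ, hνψ⟩
  have hφ_mp : MeasurePreserving φ μ ν := ⟨hφ, hνψ ▸ map_map_eq_of_ae_leftInverse hψ hφ hφψ⟩
  intro f g hf hg hf_int hg_int ε hε
  have hint_comp {h : Y → ℂ} (hh : MemLp h 2 ν) (h0 : ∫ y, h y ∂ν = 0) :
      ∫ x, (h ∘ φ) x ∂μ = 0 := by
    rw [← hφ_mp.map_eq] at hh h0
    rwa [integral_map hφ.aemeasurable hh.aestronglyMeasurable] at h0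
  obtain ⟨N, hN⟩ := hAOP (f ∘ φ) (g ∘ φ) (hf.comp_measurePreserving hφ_mp)
    (hg.comp_measurePreserving hφ_mp) (hint_comp hf hf_int) (hint_comp hg hg_int) ε hε
  refine ⟨N, fun r s hr hs hrs hNr hNs κ hκ hκ_fst hκ_snd hκ_erg => ?_⟩
  have hfst : MeasurePreserving Prod.fst κ ν := ⟨measurable_fst, hκ_fst⟩
  have hsnd : MeasurePreserving Prod.snd κ ν := ⟨measurable_snd, hκ_snd⟩
  have hψ_fst := measurePreserving_fst_map_prodMap hfst hψ_mp hψ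
  have hψ_snd := measurePreserving_snd_map_prodMap hsnd hψ hψ_mp
  have hψ_erg : Ergodic (Prod.map T^[r] T^[s]) (κ.map (Prod.map ψ ψ)) :=
    ergodic_prodMap_map_prodMap hκ_erg hfst hsnd hψ hψ (hT.measurable.iterate r)
      (hT.measurable.iterate s) (ae_semiconj_iterate hS hsemi r) (ae_semiconj_iterate hS hsemi s)
  have hκ_map : (κ.map (Prod.map ψ ψ)).map (Prod.map φ φ) = κ := by
    refine map_map_eq_of_ae_leftInverse (hψ.prodMap hψ) (hφ.prodMap hφ) ?_
    filter_upwards [hfst.quasiMeasurePreserving.ae hφψ, hsnd.quasiMeasurePreserving.ae hφψ]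
      with p hp₁ hp₂
    exact Prod.ext hp₁ hp₂
  have hF : AEStronglyMeasurable (fun p => f p.1 * (starRingEnd ℂ) (g p.2)) κ :=
    (hf.comp_measurePreserving hfst).aestronglyMeasurable.mul
      (Complex.continuous_conj.comp_aestronglyMeasurable
        (hg.comp_measurePreserving hsnd).aestronglyMeasurable)
  have hκ_int : ∫ p, f p.1 * (starRingEnd ℂ) (g p.2) ∂κ =
      ∫ p, (f ∘ φ) p.1 * (starRingEnd ℂ) ((g ∘ φ) p.2) ∂κ.map (Prod.map ψ ψ) := by
    rw [← hκ_map] at hF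
    conv_lhs => rw [← hκ_map]
    exact integral_map (hφ.prodMap hφ).aemeasurable hF
  rw [hκ_int]
  exact hN r s hr hs hrs hNr hNs _
    (Measure.isProbabilityMeasure_map (hψ.prodMap hψ).aemeasurable)
    hψ_fst.map_eq hψ_snd.map_eq hψ_erg

end IsomorphismInvariance

section OrbitCorrelations

variable {Y : Type*} [MeasurableSpace Y] {S : Y → Y} {ν : Measure Y}

theorem AOP.norm_integral_le_of_ergodic (hAOP : AOP S ν) (hS : TotallyErgodic S ν)
    (huniq : UniquelyErgodicWith S ν) {f g : Y → ℂ} (hf : MemLp f 2 ν) (hg : MemLp g 2 ν)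
    (hf_int : ∫ y, f y ∂ν = 0) (hg_int : ∫ y, g y ∂ν = 0) {ε : ℝ} (hε : 0 < ε) :
    ∃ N : ℕ, ∀ r s : ℕ, r.Prime → s.Prime → r ≠ s → N ≤ r → N ≤ s →
      ∀ ρ : ProbabilityMeasure (Y × Y), Ergodic (Prod.map S^[r] S^[s]) (ρ : Measure (Y × Y)) →
        ‖∫ p, f p.1 * (starRingEnd ℂ) (g p.2) ∂(ρ : Measure (Y × Y))‖ ≤ ε := by
  obtain ⟨N, hN⟩ := hAOP f g hf hg hf_int hg_int ε hε
  have hS_meas : Measurable S := hS.ergodic.measurable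
  refine ⟨N, fun r s hr hs hrs hNr hNs ρ hρ =>
    hN r s hr hs hrs hNr hNs ρ inferInstance ?_ ?_ hρ⟩
  · exact (huniq.iterate hS_meas hr.ne_zero (hS r hr.ne_zero)).map_eq_of_semiconj
      (hS_meas.iterate r) hρ.toMeasurePreserving measurable_fst fun _ => rfl
  · exact (huniq.iterate hS_meas hs.ne_zero (hS s hs.ne_zero)).map_eq_of_semiconj
      (hS_meas.iterate s) hρ.toMeasurePreserving measurable_snd fun _ => rfl

theorem birkhoffSum_apply_map {α M : Type*} [AddCommMonoid M] (R : α → α) (g : α → M) (N : ℕ)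
    (z : α) : birkhoffSum R g N (R z) = ∑ n ∈ Finset.Icc 1 N, g (R^[n] z) := by
  rw [← Finset.Ico_add_one_right_eq_Icc, ← Finset.sum_Ico_add' (fun n => g (R^[n] z)) 0 N 1,
    ← Finset.range_eq_Ico]
  rfl

variable [TopologicalSpace Y] [CompactSpace Y] [T2Space Y] [SecondCountableTopology Y]
  [BorelSpace Y]

theorem AOP.eventually_norm_dilationCorrelation_le (hAOP : AOP S ν) (hS : TotallyErgodic S ν)
    (huniq : UniquelyErgodicWith S ν) (hS_cont : Continuous S) {f : Y → ℂ} (hf : Continuous f)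
    (hf_int : ∫ y, f y ∂ν = 0) (y : Y) {ε : ℝ} (hε : 0 < ε) :
    ∃ N : ℕ, ∀ r s : ℕ, r.Prime → s.Prime → r ≠ s → N ≤ r → N ≤ s →
      ∀ᶠ M : ℕ in atTop,
        ‖dilationCorrelation ℂ (fun n => f (S^[n] y)) r s M‖ ≤ ε * M := by
  have := huniq.1
  have hf_mem : MemLp f 2 ν :=
    hf.memLp_of_hasCompactSupport (HasCompactSupport.of_compactSpace f)
  obtain ⟨N, hN⟩ := hAOP.norm_integral_le_of_ergodic hS huniq hf_mem hf_mem hf_int hf_int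
    (half_pos hε)
  refine ⟨N, fun r s hr hs hrs hNr hNs => ?_⟩
  let R : Y × Y → Y × Y := Prod.map S^[s] S^[r]
  let F : Y × Y → ℂ := fun p => f p.1 * (starRingEnd ℂ) (f p.2)
  have hR : Continuous R := (hS_cont.iterate s).prodMap (hS_cont.iterate r)
  have hF : Continuous F := (hf.comp continuous_fst).mul
    (Complex.continuous_conj.comp (hf.comp continuous_snd))
  filter_upwards [eventually_norm_birkhoffAverage_le hR hF (half_lt_self hε)
    (hN s r hs hr hrs.symm hNs hNr) (R (y, y)), eventually_gt_atTop 0] with M hM hM_pos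
  have hsum : dilationCorrelation ℂ (fun n => f (S^[n] y)) r s M =
      birkhoffSum R F M (R (y, y)) := by
    rw [dilationCorrelation, birkhoffSum_apply_map]
    refine Finset.sum_congr rfl fun n _ => ?_
    simp only [RCLike.inner_apply, R, F, Prod.map_iterate, Prod.map_apply, Function.iterate_mul]
  rwa [birkhoffAverage, norm_smul, norm_inv, RCLike.norm_natCast,
    inv_mul_le_iff₀ (Nat.cast_pos.2 hM_pos), ← hsum, mul_comm] at hM

end OrbitCorrelations

theorem sarnak_of_AOP_uniquelyErgodicModel_general
    {X : Type*} [MeasurableSpace X] {μ : Measure X} {T : X → X}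
    (hTerg : TotallyErgodic T μ) (hAOP : AOP T μ)
    {Y : Type*} [TopologicalSpace Y] [CompactSpace Y] [T2Space Y] [SecondCountableTopology Y]
    [MeasurableSpace Y] [BorelSpace Y] {S : Y → Y} (hScont : Continuous S) {ν : Measure Y}
    (huniq : UniquelyErgodicWith S ν) (hiso : MeasureIso T μ S ν)
    {u : ℕ → ℂ} (hu_mult : ∀ m n : ℕ, Nat.Coprime m n → u (m * n) = u m * u n)
    (hu_bd : ∀ n, ‖u n‖ ≤ 1) {f : Y → ℂ} (hf : Continuous f) (hf_int : (∫ y, f y ∂ν) = 0) (y : Y) :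
    Tendsto (fun N : ℕ => (N : ℂ)⁻¹ * ∑ n ∈ Finset.Icc 1 N, f (S^[n] y) * u n)
      atTop (𝓝 0) := by
  have hS : TotallyErgodic S ν := hTerg.of_measureIso hScont.measurable hiso
  have hS_AOP : AOP S ν := hAOP.of_measureIso hTerg.ergodic.toMeasurePreserving
    hS.ergodic.toMeasurePreserving hiso
  obtain ⟨B, hB⟩ := isCompact_univ.exists_bound_of_continuousOn hf.continuousOn
  have horbit : (fun N : ℕ => ∑ n ∈ Finset.Icc 1 N, u n • f (S^[n] y)) =o[atTop]
      fun N : ℕ => (N : ℂ) :=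
    isLittleO_sum_smul_of_multiplicative (fun n => hB (S^[n] y) (Set.mem_univ _)) hu_bd hu_mult
      fun _ hε => hS_AOP.eventually_norm_dilationCorrelation_le hS huniq hScont hf hf_int y hε
  simpa only [smul_eq_mul, mul_comm (u _)] using horbit.tendsto_inv_smul_nhds_zero

/-- **Theorem 1.2.** If `T` is a totally ergodic automorphism of a standard Borel probability
space `(X,μ)` with the AOP property, and `(Y,S)` is a uniquely ergodic model of `(X,μ,T)`,
then for every multiplicative `u : ℕ → ℂ`, `|u| ≤ 1`, every continuous `f` with `∫ f dν = 0`
and every `y ∈ Y`, `(1/N) ∑_{n ≤ N} f(Sⁿ y) u(n) → 0`. -/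
theorem sarnak_of_AOP_uniquelyErgodicModel
    {X : Type*} [MeasurableSpace X] [StandardBorelSpace X]
    (μ : Measure X) [IsProbabilityMeasure μ] (T : X ≃ᵐ X)
    (hT : MeasurePreserving T μ μ)
    (hTerg : TotallyErgodic (⇑T) μ)
    (hAOP : AOP (⇑T) μ)
    {Y : Type*} [MetricSpace Y] [CompactSpace Y] [MeasurableSpace Y] [BorelSpace Y]
    (S : Y → Y) (hScont : Continuous S) (ν : Measure Y)
    (huniq : UniquelyErgodicWith S ν)
    (hiso : MeasureIso (⇑T) μ S ν)
    (u : ℕ → ℂ) (hu_mult : ∀ m n : ℕ, Nat.Coprime m n → u (m * n) = u m * u n)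
    (hu_bd : ∀ n, ‖u n‖ ≤ 1)
    (f : Y → ℂ) (hf : Continuous f) (hf_int : (∫ y, f y ∂ν) = 0) (y : Y) :
    Tendsto (fun N : ℕ => (N : ℂ)⁻¹ * ∑ n ∈ Finset.Icc 1 N, f (S^[n] y) * u n)
      atTop (nhds 0) :=
  sarnak_of_AOP_uniquelyErgodicModel_general hTerg hAOP hScont huniq hiso hu_mult hu_bd hf hf_int y
end

section
/- Let (X,T) be a uniquely ergodic topological dynamical system on a compact metric space with unique invariant probability measure μ. Assume that for every uniquely ergodic model (Y,S) of (X,μ,T) — i.e., every uniquely ergodic continuous map S of a compact metric space Y whose unique invariant probability measure ν makes (Y,ν,S) measure-theoretically isomorphic to (X,μ,T) — the following holds: for every multiplicative u : ℕ → ℂ with |u| ≤ 1, every continuous f with ∫_Y f dν = 0 and every y ∈ Y, (1/N) Σ_{n ≤ N} f(Sⁿy) u(n) → 0. Let 1 = b₁ < b₂ < ⋯ be an increasing sequence of integers with b_{k+1} − b_k → ∞, and let (x_k) be an arbitrary sequence of points in X. Then for every multiplicative function u : ℕ → ℂ with |u(n)| ≤ 1 and every continuous f : X → ℂ with ∫_X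 f dμ = 0, one has (1/b_{K+1}) Σ_{1 ≤ k ≤ K} Σ_{b_k ≤ n < b_{k+1}} f(Tⁿx_k) u(n) → 0 as K → ∞. -/
open MeasureTheory Filter

universe u

/-!
Follow `x k` along the `k`-th block `[b k, b (k + 1))`, that is, consider the sequence
`y n = T^[n] (x (κ n))`, where `κ n` is the index of the block containing `n`. It obeys
`y (n + 1) = T (y n)` except when a new block starts at `n + 1`, and since the gaps of `b` tend to
infinity, every window of length `N` contains at most `(C M + N) / M` such times, for every `M`. The
sequences obeying all these bounds form a closed, hence compact, shift-invariant subset of `ℕ → X`.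
A shift-invariant probability measure on it cannot charge the sequences switching at time `0`, so
almost every sequence is the orbit of its zeroth coordinate. Thus the shift is a uniquely ergodic
model of `(X, μ, T)`, and evaluating `f` at the zeroth coordinate along the shift orbit of `y` gives
the averages over the blocks.
-/

/-! ### Uniformly sparse sets of times -/

/-- A set of natural numbers of upper Banach density zero with rate `C`: any window of length `N`
contains at most `(C M + N) / M` elements of `s`, for every `M`. Counting through finite subsets
`A ⊆ s` avoids cardinalities of undecidable sets. -/
def UniformlySparse (C : ℕ → ℕ) (s : Set ℕ) : Prop :=
  ∀ A : Finset ℕ, ↑A ⊆ s → ∀ M j N, A ⊆ Finset.Ico j (j + N) → A.card * M ≤ C M + N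

section UniformlySparse

variable {C : ℕ → ℕ} {s t : Set ℕ}

theorem uniformlySparse_empty (C : ℕ → ℕ) : UniformlySparse C ∅ := by
  intro A hA M j N _
  simp [Finset.coe_eq_empty.1 (Set.subset_empty_iff.1 hA)]

theorem UniformlySparse.mono (ht : UniformlySparse C t) (hst : s ⊆ t) : UniformlySparse C s :=
  fun A hA => ht A (hA.trans hst)

theorem UniformlySparse.preimage_add_one (hs : UniformlySparse C s) :
    UniformlySparse C ((· + 1) ⁻¹' s) := by
  intro A hA M j N hAj
  rw [← Finset.card_map (addRightEmbedding 1)]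
  refine hs _ ?_ M (j + 1) N ?_
  · simpa using hA
  · rw [add_right_comm, ← Finset.map_add_right_Ico]
    exact Finset.map_subset_map.2 hAj

theorem isClosed_setOf_uniformlySparse {α : Type*} [TopologicalSpace α] {s : α → Set ℕ}
    (hs : ∀ n, IsOpen {a | n ∈ s a}) : IsClosed {a | UniformlySparse C (s a)} := by
  simp only [UniformlySparse, Set.ofPred_forall]
  refine isClosed_iInter fun A => isClosed_imp ?_ isClosed_const
  have hsubset : {a | ↑A ⊆ s a} = ⋂ n ∈ A, {a | n ∈ s a} := by
    ext a
    simp [Set.subset_def]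
  rw [hsubset]
  exact isOpen_biInter_finset fun n _ => hs n

theorem card_mul_le_of_separated {A : Finset ℕ} {M j N : ℕ} (hA : A ⊆ Finset.Ico j (j + N))
    (hsep : ∀ m ∈ A, ∀ n ∈ A, m < n → m + M ≤ n) : A.card * M ≤ M + N := by
  have hdisj : (A : Set ℕ).PairwiseDisjoint fun a => Finset.Ico a (a + M) := by
    intro m hm n hn hmn
    rw [Function.onFun, Finset.disjoint_left]
    intro i hi hi'
    simp only [Finset.mem_Ico] at hi hi'
    rcases hmn.lt_or_gt with h | h
    · have := hsep m hm n hn h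
      omega
    · have := hsep n hn m hm h
      omega
  calc A.card * M = (A.biUnion fun a => Finset.Ico a (a + M)).card := by
        simp [Finset.card_biUnion hdisj]
    _ ≤ (Finset.Ico j (j + N + M)).card := by
        refine Finset.card_le_card (Finset.biUnion_subset.2 fun a ha => ?_)
        have := Finset.mem_Ico.1 (hA ha)
        exact Finset.Ico_subset_Ico (by omega) (by omega)
    _ = M + N := by
        rw [Nat.card_Ico]
        omega

variable {b : ℕ → ℕ}

theorem exists_uniformlySparse_range
    (hgap : Tendsto (fun k => b (k + 1) - b k) atTop atTop) :
    ∃ C, UniformlySparse C (Set.range b) := by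
  choose K hK using fun M => (tendsto_atTop.1 hgap (M + 1)).exists_forall_of_atTop
  refine ⟨fun M => (K M + 1) * M, fun A hA M j N hAj => ?_⟩
  have hstep : ∀ k ≥ K M, b k + M ≤ b (k + 1) := fun k hk => by
    have := hK M k hk
    omega
  have hmono : MonotoneOn b {k | K M ≤ k} :=
    monotoneOn_nat_Ici_of_le_succ fun k hk => (Nat.le_add_right _ M).trans (hstep k hk)
  let B := (Finset.range (K M)).image b
  have hB : B.card ≤ K M := Finset.card_image_le.trans_eq (Finset.card_range _)
  have hsep : ∀ m ∈ A \ B, ∀ n ∈ A \ B, m < n → m + M ≤ n := by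
    have index_of_mem : ∀ n ∈ A \ B, ∃ k, K M ≤ k ∧ b k = n := fun n hn => by
      obtain ⟨hnA, hnB⟩ := Finset.mem_sdiff.1 hn
      obtain ⟨k, rfl⟩ := hA hnA
      exact ⟨k, not_lt.1 fun hk => hnB (Finset.mem_image_of_mem b (Finset.mem_range.2 hk)), rfl⟩
    intro m hm n hn hmn
    obtain ⟨k, hk, rfl⟩ := index_of_mem m hm
    obtain ⟨l, hl, rfl⟩ := index_of_mem n hn
    have hkl : k < l := hmono.reflect_lt hk hl hmn
    exact (hstep k hk).trans (hmono (Nat.le_succ_of_le hk) hl hkl)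
  calc A.card * M ≤ ((A \ B).card + B.card) * M := by
        gcongr
        exact Finset.card_le_card_sdiff_add_card
    _ ≤ (M + N) + K M * M := by
        rw [add_mul]
        gcongr
        exact card_mul_le_of_separated (Finset.sdiff_subset.trans hAj) hsep
    _ = (K M + 1) * M + N := by ring

theorem exists_strictMono_tail (hgap : Tendsto (fun k => b (k + 1) - b k) atTop atTop) :
    ∃ K, StrictMono fun k => b (k + K) := by
  obtain ⟨K, hK⟩ := (hgap.eventually_gt_atTop 0).exists_forall_of_atTop
  refine ⟨K, strictMono_nat_of_lt_succ fun k => ?_⟩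
  rw [add_right_comm]
  exact Nat.lt_of_sub_pos (hK (k + K) (Nat.le_add_left K k))

end UniformlySparse

/-! ### Blocks of times and averages over them -/

theorem exists_blockIndex {b : ℕ → ℕ} {K : ℕ} (hb : StrictMono fun k => b (k + K)) :
    ∃ κ : ℕ → ℕ, (∀ k ≥ K, ∀ n ∈ Finset.Ico (b k) (b (k + 1)), κ n = k) ∧
      ∀ n, κ (n + 1) ≠ κ n → n + 1 ∈ Set.range b := by
  let P (n k : ℕ) : Prop := b (k + K) ≤ n
  have le_of_P {n k : ℕ} (h : P n k) : k ≤ n := hb.le_apply.trans h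
  refine ⟨fun n => Nat.findGreatest (P n) n + K, fun k hk n hn => ?_, fun n hne => ?_⟩
  · obtain ⟨l, rfl⟩ := Nat.exists_eq_add_of_le' hk
    obtain ⟨hln, hnl⟩ := Finset.mem_Ico.1 hn
    rw [Nat.add_right_cancel_iff, Nat.findGreatest_eq_iff]
    refine ⟨le_of_P hln, fun _ => hln, fun i hli _ => ?_⟩
    rw [add_right_comm] at hnl
    exact (hnl.trans_le (hb.monotone hli)).not_ge
  · have hlt : Nat.findGreatest (P n) n < Nat.findGreatest (P (n + 1)) (n + 1) :=
      lt_of_le_of_ne (Nat.findGreatest_mono (fun _ => Nat.le_succ_of_le) n.le_succ)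
        fun h => hne (congrArg (· + K) h.symm)
    have hP : P (n + 1) (Nat.findGreatest (P (n + 1)) (n + 1)) :=
      Nat.findGreatest_of_ne_zero rfl hlt.ne_bot
    refine ⟨_, le_antisymm hP (Nat.lt_of_not_ge fun h => ?_)⟩
    exact hlt.not_ge (Nat.le_findGreatest (le_of_P h) h)

theorem exists_sum_blocks_eq_add {M : Type*} [AddCommGroup M] {g a : ℕ → M} {b : ℕ → ℕ} {K₀ : ℕ}
    (hb : ∀ k ≥ K₀, b k ≤ b (k + 1))
    (ha : ∀ k ≥ K₀, a k = ∑ n ∈ Finset.Ico (b k) (b (k + 1)), g n) :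
    ∃ c, ∀ K ≥ K₀, ∑ k ∈ Finset.Icc 1 K, a k = c + ∑ n ∈ Finset.range (b (K + 1)), g n := by
  refine ⟨∑ k ∈ Finset.Icc 1 K₀, a k - ∑ n ∈ Finset.range (b (K₀ + 1)), g n, fun K hK => ?_⟩
  induction K, hK using Nat.le_induction with
  | base => rw [sub_add_cancel]
  | succ K hK ih =>
    have hK' : K₀ ≤ K + 1 := Nat.le_succ_of_le hK
    rw [Finset.sum_Icc_succ_top K.succ_pos, ih, ha _ hK', add_assoc,
      Finset.sum_range_add_sum_Ico _ (hb _ hK')]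

section Averages

variable {𝕜 E : Type*} [RCLike 𝕜] [AddCommGroup E] [Module 𝕜 E] [TopologicalSpace E]
  [ContinuousAdd E] [ContinuousSMul 𝕜 E] {g : ℕ → E} {l : E}

theorem tendsto_average_range_of_Icc
    (hg : Tendsto (fun N : ℕ => (N : 𝕜)⁻¹ • ∑ n ∈ Finset.Icc 1 N, g n) atTop (nhds l)) :
    Tendsto (fun N : ℕ => (N : 𝕜)⁻¹ • ∑ n ∈ Finset.range N, g n) atTop (nhds l) := by
  rw [← tendsto_add_atTop_iff_nat 1]
  have hinv : Tendsto (fun N : ℕ => ((N + 1 : ℕ) : 𝕜)⁻¹) atTop (nhds 0) :=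
    (tendsto_add_atTop_iff_nat 1).2 tendsto_inv_atTop_nhds_zero_nat
  have hlim := (hinv.smul_const (g 0)).add ((tendsto_natCast_div_add_atTop (1 : 𝕜)).smul hg)
  rw [zero_smul, one_smul, zero_add] at hlim
  refine hlim.congr fun N => ?_
  have hsum : ∑ n ∈ Finset.range (N + 1), g n = g 0 + ∑ n ∈ Finset.Icc 1 N, g n := by
    rw [Finset.range_eq_Ico, Finset.sum_eq_sum_Ico_succ_bot N.succ_pos]
    rfl
  rcases eq_or_ne N 0 with rfl | hN
  · simp
  · have hN' : (N : 𝕜) ≠ 0 := Nat.cast_ne_zero.2 hN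
    rw [hsum, smul_add, smul_smul, div_mul_eq_mul_div, mul_inv_cancel₀ hN', one_div, Nat.cast_succ]

theorem tendsto_average_blocks {a : ℕ → E} {b : ℕ → ℕ} {K₀ : ℕ} (hb : Tendsto b atTop atTop)
    (hmono : ∀ k ≥ K₀, b k ≤ b (k + 1))
    (ha : ∀ k ≥ K₀, a k = ∑ n ∈ Finset.Ico (b k) (b (k + 1)), g n)
    (hg : Tendsto (fun N : ℕ => (N : 𝕜)⁻¹ • ∑ n ∈ Finset.Icc 1 N, g n) atTop (nhds l)) :
    Tendsto (fun K => (b (K + 1) : 𝕜)⁻¹ • ∑ k ∈ Finset.Icc 1 K, a k) atTop (nhds l) := by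
  obtain ⟨c, hc⟩ := exists_sum_blocks_eq_add hmono ha
  have hconst : Tendsto (fun N : ℕ => (N : 𝕜)⁻¹ • c) atTop (nhds 0) := by
    simpa using (tendsto_inv_atTop_nhds_zero_nat (𝕜 := 𝕜)).smul_const c
  have hlim := (hconst.add (tendsto_average_range_of_Icc hg)).comp
    (hb.comp (tendsto_add_atTop_nat 1))
  rw [zero_add] at hlim
  refine hlim.congr' ?_
  filter_upwards [eventually_ge_atTop K₀] with K hK
  simp only [Function.comp_apply, hc K hK, smul_add]

end Averages

/-! ### Sets visited uniformly sparsely -/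

section Visits

variable {Y : Type*} [MeasurableSpace Y] {S : Y → Y} {ν : Measure Y}

theorem integral_birkhoffSum {E : Type*} [NormedAddCommGroup E] [NormedSpace ℝ E]
    (hS : MeasurePreserving S ν ν) {f : Y → E} (hf : Integrable f ν) (N : ℕ) :
    ∫ y, birkhoffSum S f N y ∂ν = N • ∫ y, f y ∂ν := by
  have hint (n : ℕ) : Integrable (fun y => f (S^[n] y)) ν :=
    (hS.iterate n).integrable_comp_of_integrable hf
  have hinv (n : ℕ) : ∫ y, f (S^[n] y) ∂ν = ∫ y, f y ∂ν := by
    have hn := hS.iterate n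
    have h := integral_map hn.aemeasurable (f := f) (by simpa [hn.map_eq] using hf.1)
    rwa [hn.map_eq, eq_comm] at h
  simp only [birkhoffSum]
  rw [integral_finsetSum _ fun n _ => hint n]
  simp [hinv]

theorem le_of_forall_natCast_mul_le_add {R : Type*} [Field R] [LinearOrder R]
    [IsStrictOrderedRing R] [Archimedean R] {r s c : R} (h : ∀ N : ℕ, N * r ≤ c + N * s) :
    r ≤ s := by
  by_contra! hsr
  obtain ⟨N, hN⟩ := exists_lt_nsmul (sub_pos.2 hsr) c
  rw [nsmul_eq_mul, mul_sub] at hN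
  linarith [h N]

theorem measure_eq_zero_of_uniformlySparse_visits [IsFiniteMeasure ν]
    (hS : MeasurePreserving S ν ν) {U : Set Y} (hU : MeasurableSet U) {C : ℕ → ℕ}
    (hC : ∀ᵐ y ∂ν, UniformlySparse C {n | S^[n] y ∈ U}) : ν U = 0 := by
  classical
  let visits (N : ℕ) : Y → ℝ := birkhoffSum S (U.indicator fun _ => 1) N
  have hint : Integrable (U.indicator fun _ => (1 : ℝ)) ν := (integrable_const 1).indicator hU
  have integral_visits (N : ℕ) : ∫ y, visits N y ∂ν = N * ν.real U := by
    rw [integral_birkhoffSum hS hint, integral_indicator_const _ hU]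
    simp
  have integrable_visits (N : ℕ) : Integrable (visits N) ν :=
    integrable_finsetSum _ fun n _ => (hS.iterate n).integrable_comp_of_integrable hint
  have visits_le (M N : ℕ) : ∀ᵐ y ∂ν, visits N y * M ≤ C M + N := by
    filter_upwards [hC] with y hy
    have h := hy {n ∈ Finset.range N | S^[n] y ∈ U} (fun n hn => (Finset.mem_filter.1 hn).2) M 0 N
      (by simp)
    have hcard : visits N y = Finset.card {n ∈ Finset.range N | S^[n] y ∈ U} := by
      simp [visits, birkhoffSum, Set.indicator_apply]
    rw [hcard]
    exact_mod_cast h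
  have mul_measure_le (M N : ℕ) :
      N * (M * ν.real U) ≤ C M * ν.real Set.univ + N * ν.real Set.univ :=
    calc N * (M * ν.real U) = ∫ y, visits N y * M ∂ν := by
          rw [integral_mul_const, integral_visits]
          ring
      _ ≤ ∫ _, ((C M : ℝ) + N) ∂ν :=
          integral_mono_ae ((integrable_visits N).mul_const _) (integrable_const _) (visits_le M N)
      _ = C M * ν.real Set.univ + N * ν.real Set.univ := by
          rw [integral_const, smul_eq_mul]
          ring
  have hmass (M : ℕ) : M * ν.real U ≤ ν.real Set.univ + M * 0 := by
    rw [mul_zero, add_zero]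
    exact le_of_forall_natCast_mul_le_add (mul_measure_le M)
  exact (measureReal_eq_zero_iff ..).1
    (le_antisymm (le_of_forall_natCast_mul_le_add hmass) measureReal_nonneg)

end Visits

/-! ### The space of sparsely switching sequences -/

/-- The times `n` at which the sequence `w` leaves the orbit of its current value, so that `w` jumps
to another orbit at time `n + 1`. -/
def switchTimes {X : Type*} (T : X → X) (w : ℕ → X) : Set ℕ :=
  {n | w (n + 1) ≠ T (w n)}

/-- The sequences in `X` made of pieces of `T`-orbits whose switching times are uniformly sparse
with rate `C`. For continuous `T` it is a closed subset of `ℕ → X`, and it carries the model of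
`(X, T)` in which the sequence glued along blocks is a point. -/
def sparselySwitching {X : Type*} (T : X → X) (C : ℕ → ℕ) : Set (ℕ → X) :=
  {w | UniformlySparse C (switchTimes T w)}

section SparselySwitching

variable {X : Type*} {T : X → X} {C : ℕ → ℕ}

theorem switchTimes_glue_subset (x : ℕ → X) (κ : ℕ → ℕ) :
    switchTimes T (fun n => T^[n] (x (κ n))) ⊆ {n | κ (n + 1) ≠ κ n} := fun n hn hκ =>
  hn (by simp only [hκ, Function.iterate_succ_apply'])

theorem switchTimes_iterate (a : X) : switchTimes T (fun n => T^[n] a) = ∅ :=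
  Set.eq_empty_of_subset_empty fun n hn => hn (Function.iterate_succ_apply' T n a)

theorem eq_iterate_of_switchTimes_eq_empty {w : ℕ → X} (hw : switchTimes T w = ∅) (n : ℕ) :
    w n = T^[n] (w 0) := by
  induction n with
  | zero => rfl
  | succ n ih =>
    have hn : w (n + 1) = T (w n) := not_not.1 (Set.eq_empty_iff_forall_notMem.1 hw n)
    rw [hn, ih, Function.iterate_succ_apply']

theorem isClosed_sparselySwitching [TopologicalSpace X] [T2Space X] (hT : Continuous T) :
    IsClosed (sparselySwitching T C) :=
  isClosed_setOf_uniformlySparse fun n =>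
    isOpen_ne_fun (continuous_apply (n + 1)) (hT.comp (continuous_apply n))

/-- The shift `w ↦ (w 1, w 2, …)` on sparsely switching sequences. -/
def sparseShift (T : X → X) (C : ℕ → ℕ) (w : sparselySwitching T C) : sparselySwitching T C :=
  ⟨fun n => w.1 (n + 1), UniformlySparse.preimage_add_one w.2⟩

/-- The `T`-orbit of a point, embedding `(X, T)` into the shift on sparsely switching sequences. -/
def orbitPoint (T : X → X) (C : ℕ → ℕ) (a : X) : sparselySwitching T C :=
  ⟨fun n => T^[n] a, by
    rw [sparselySwitching, Set.mem_ofPred_eq, switchTimes_iterate]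
    exact uniformlySparse_empty C⟩

theorem sparseShift_iterate_apply (n : ℕ) (w : sparselySwitching T C) (m : ℕ) :
    ((sparseShift T C)^[n] w).1 m = w.1 (m + n) := by
  induction n generalizing w with
  | zero => rfl
  | succ n ih =>
    rw [Function.iterate_succ_apply, ih]
    rfl

theorem semiconj_orbitPoint : Function.Semiconj (orbitPoint T C) T (sparseShift T C) := fun _ => rfl

theorem continuous_sparselySwitching_apply [TopologicalSpace X] (n : ℕ) :
    Continuous fun w : sparselySwitching T C => w.1 n :=
  (continuous_apply n).comp continuous_subtype_val

theorem continuous_sparseShift [TopologicalSpace X] : Continuous (sparseShift T C) :=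
  (continuous_pi fun n => continuous_sparselySwitching_apply (n + 1)).subtype_mk _

end SparselySwitching

section Measure

variable {X : Type*} [MeasurableSpace X] {T : X → X} {C : ℕ → ℕ} {μ : Measure X}

theorem measurable_sparselySwitching_apply (n : ℕ) :
    Measurable fun w : sparselySwitching T C => w.1 n :=
  (measurable_pi_apply n).comp measurable_subtype_coe

theorem measurable_sparseShift : Measurable (sparseShift T C) :=
  (measurable_pi_lambda _ fun n => measurable_sparselySwitching_apply (n + 1)).subtype_mk

theorem measurable_orbitPoint (hT : Measurable T) : Measurable (orbitPoint T C) :=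
  (measurable_pi_lambda _ fun n => hT.iterate n).subtype_mk

theorem ae_eq_orbitPoint [MeasurableEq X] (hT : Measurable T)
    {ν : Measure (sparselySwitching T C)} [IsFiniteMeasure ν]
    (hν : MeasurePreserving (sparseShift T C) ν ν) : ∀ᵐ w ∂ν, orbitPoint T C (w.1 0) = w := by
  let U : Set (sparselySwitching T C) := {w | 0 ∈ switchTimes T w.1}
  have hU : MeasurableSet U :=
    (measurableSet_eq_fun (measurable_sparselySwitching_apply 1)
      (hT.comp (measurable_sparselySwitching_apply 0))).compl
  have visits_U (w : sparselySwitching T C) :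
      {n | (sparseShift T C)^[n] w ∈ U} = switchTimes T w.1 := by
    ext n
    simp [U, switchTimes, sparseShift_iterate_apply, add_comm]
  have hνU : ν U = 0 := measure_eq_zero_of_uniformlySparse_visits hν hU <|
    .of_forall fun w => by
      rw [visits_U]
      exact w.2
  have never_visits : ∀ᵐ w ∂ν, ∀ n, (sparseShift T C)^[n] w ∉ U :=
    ae_all_iff.2 fun n =>
      (hν.iterate n).quasiMeasurePreserving.ae (measure_eq_zero_iff_ae_notMem.1 hνU)
  filter_upwards [never_visits] with w hw
  have hw : switchTimes T w.1 = ∅ := by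
    rw [← visits_U]
    exact Set.eq_empty_of_forall_notMem hw
  exact Subtype.ext (funext fun n => (eq_iterate_of_switchTimes_eq_empty hw n).symm)

theorem map_orbitPoint_map_apply_zero [MeasurableEq X] (hT : Measurable T)
    {ν : Measure (sparselySwitching T C)} [IsFiniteMeasure ν]
    (hν : MeasurePreserving (sparseShift T C) ν ν) :
    (ν.map fun w => w.1 0).map (orbitPoint T C) = ν := by
  rw [Measure.map_map (measurable_orbitPoint hT) (measurable_sparselySwitching_apply 0)]
  exact (Measure.map_congr (ae_eq_orbitPoint hT hν)).trans Measure.map_id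

theorem measurePreserving_map_apply_zero [MeasurableEq X] (hT : Measurable T)
    {ν : Measure (sparselySwitching T C)} [IsFiniteMeasure ν]
    (hν : MeasurePreserving (sparseShift T C) ν ν) :
    MeasurePreserving T (ν.map fun w => w.1 0) (ν.map fun w => w.1 0) := by
  have h0 := measurable_sparselySwitching_apply (T := T) (C := C) 0
  have hsemi : (fun w => T (w.1 0)) =ᵐ[ν] fun w => (sparseShift T C w).1 0 :=
    (ae_eq_orbitPoint hT hν).mono fun w hw => congrFun (congrArg Subtype.val hw) 1
  refine ⟨hT, ?_⟩
  calc (ν.map fun w => w.1 0).map T = ν.map fun w => T (w.1 0) := Measure.map_map hT h0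
    _ = ν.map fun w => (sparseShift T C w).1 0 := Measure.map_congr hsemi
    _ = (ν.map (sparseShift T C)).map fun w => w.1 0 :=
        (Measure.map_map h0 measurable_sparseShift).symm
    _ = ν.map fun w => w.1 0 := by rw [hν.map_eq]

theorem measurePreserving_sparseShift (hT : MeasurePreserving T μ μ) :
    MeasurePreserving (sparseShift T C) (μ.map (orbitPoint T C)) (μ.map (orbitPoint T C)) :=
  ((measurable_orbitPoint hT.measurable).measurePreserving μ).of_semiconj hT semiconj_orbitPoint
    measurable_sparseShift

theorem uniquelyErgodicWith_sparseShift [MeasurableEq X] (hT : Measurable T)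
    (h : UniquelyErgodicWith T μ) :
    UniquelyErgodicWith (sparseShift T C) (μ.map (orbitPoint T C)) := by
  obtain ⟨hμ, hTμ, huniq⟩ := h
  refine ⟨Measure.isProbabilityMeasure_map (measurable_orbitPoint hT).aemeasurable,
    (measurePreserving_sparseShift ⟨hT, hTμ⟩).map_eq, fun ν hν hνS => ?_⟩
  have hνS : MeasurePreserving (sparseShift T C) ν ν := ⟨measurable_sparseShift, hνS⟩
  have hmarginal : (ν.map fun w => w.1 0) = μ :=
    huniq _ (Measure.isProbabilityMeasure_map (measurable_sparselySwitching_apply 0).aemeasurable)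
      (measurePreserving_map_apply_zero hT hνS).map_eq
  rw [← hmarginal, map_orbitPoint_map_apply_zero hT hνS]

theorem measureIso_sparseShift [MeasurableEq X] [IsFiniteMeasure μ] (hT : MeasurePreserving T μ μ) :
    MeasureIso T μ (sparseShift T C) (μ.map (orbitPoint T C)) :=
  ⟨orbitPoint T C, fun w => w.1 0, measurable_orbitPoint hT.measurable,
    measurable_sparselySwitching_apply 0, rfl, .of_forall fun _ => rfl,
    ae_eq_orbitPoint hT.measurable (measurePreserving_sparseShift hT),
    .of_forall semiconj_orbitPoint⟩

end Measure

/-! ### Orthogonality to all uniquely ergodic models -/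

/-- The weight `u` is orthogonal to every uniquely ergodic model of `(X, μ, T)`: in each of them the
`u`-weighted averages of mean-zero continuous functions tend to `0` at every point. The models range
over the universe of `X`. -/
def OrthogonalToModels {𝕜 : Type*} [RCLike 𝕜] {X : Type u} [MeasurableSpace X] (T : X → X)
    (μ : Measure X) (u : ℕ → 𝕜) : Prop :=
  ∀ (Y : Type u) [MetricSpace Y] [CompactSpace Y] [MeasurableSpace Y] [BorelSpace Y] (S : Y → Y)
    (ν : Measure Y), Continuous S → UniquelyErgodicWith S ν → MeasureIso T μ S ν →
    ∀ f : Y → 𝕜, Continuous f → ∫ y, f y ∂ν = 0 → ∀ y,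
      Tendsto (fun N : ℕ => (N : 𝕜)⁻¹ * ∑ n ∈ Finset.Icc 1 N, f (S^[n] y) * u n) atTop (nhds 0)

section Orthogonality

variable {𝕜 : Type*} [RCLike 𝕜] {X : Type u} [TopologicalSpace X] [CompactSpace X] [T2Space X]
  [SecondCountableTopology X] [MeasurableSpace X] [BorelSpace X]
  {T : X → X} {μ : Measure X} {u : ℕ → 𝕜} {f : X → 𝕜}

theorem OrthogonalToModels.tendsto_average_of_mem_sparselySwitching
    (hu : OrthogonalToModels T μ u) (hT : Continuous T) (hμ : UniquelyErgodicWith T μ)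
    (hf : Continuous f) (hf_int : ∫ z, f z ∂μ = 0) {C : ℕ → ℕ} {w : ℕ → X}
    (hw : w ∈ sparselySwitching T C) :
    Tendsto (fun N : ℕ => (N : 𝕜)⁻¹ * ∑ n ∈ Finset.Icc 1 N, f (w n) * u n) atTop (nhds 0) := by
  have := hμ.1
  let _ := TopologicalSpace.metrizableSpaceMetric (sparselySwitching T C)
  have : CompactSpace (sparselySwitching T C) :=
    isCompact_iff_compactSpace.1 (isClosed_sparselySwitching hT).isCompact
  have hf₀ : Continuous fun w : sparselySwitching T C => f (w.1 0) :=
    hf.comp (continuous_sparselySwitching_apply 0)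
  have hf₀_int : ∫ w : sparselySwitching T C, f (w.1 0) ∂μ.map (orbitPoint T C) = 0 :=
    (integral_map (measurable_orbitPoint hT.measurable).aemeasurable
      hf₀.aestronglyMeasurable).trans hf_int
  simpa [sparseShift_iterate_apply] using hu _ _ _ continuous_sparseShift
    (uniquelyErgodicWith_sparseShift hT.measurable hμ)
    (measureIso_sparseShift ⟨hT.measurable, hμ.2.1⟩) _ hf₀ hf₀_int ⟨w, hw⟩

theorem sarnak_orbit_switching_general (hT : Continuous T) (hμ : UniquelyErgodicWith T μ)
    (hu : OrthogonalToModels T μ u) {b : ℕ → ℕ}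
    (hgap : Tendsto (fun k => b (k + 1) - b k) atTop atTop) (x : ℕ → X)
    (hf : Continuous f) (hf_int : ∫ z, f z ∂μ = 0) :
    Tendsto (fun K : ℕ => (b (K + 1) : 𝕜)⁻¹ *
        ∑ k ∈ Finset.Icc 1 K, ∑ n ∈ Finset.Ico (b k) (b (k + 1)), f (T^[n] (x k)) * u n)
      atTop (nhds 0) := by
  obtain ⟨C, hC⟩ := exists_uniformlySparse_range hgap
  obtain ⟨K₀, hK₀⟩ := exists_strictMono_tail hgap
  obtain ⟨κ, hκ, hκ_succ⟩ := exists_blockIndex hK₀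
  have hglue : (fun n => T^[n] (x (κ n))) ∈ sparselySwitching T C :=
    hC.preimage_add_one.mono fun n hn => hκ_succ n (switchTimes_glue_subset x κ hn)
  have hb : Tendsto b atTop atTop := (tendsto_add_atTop_iff_nat K₀).1 hK₀.tendsto_atTop
  have hmono : MonotoneOn b {k | K₀ ≤ k} :=
    monotone_add_nat_iff_monotoneOn_nat_Ici.1 hK₀.monotone
  have hblock : ∀ k ≥ K₀, ∑ n ∈ Finset.Ico (b k) (b (k + 1)), f (T^[n] (x k)) * u n =
      ∑ n ∈ Finset.Ico (b k) (b (k + 1)), f (T^[n] (x (κ n))) * u n :=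
    fun k hk => Finset.sum_congr rfl fun n hn => by rw [hκ k hk n hn]
  simpa only [smul_eq_mul] using tendsto_average_blocks (𝕜 := 𝕜) hb
    (fun k hk => hmono hk (Nat.le_succ_of_le hk) k.le_succ) hblock
    (hu.tendsto_average_of_mem_sparselySwitching hT hμ hf hf_int hglue)

end Orthogonality

/-- **Theorem 1.4.** Let `(X,T)` be uniquely ergodic with unique invariant measure `μ`.
Assume that in every uniquely ergodic model `(Y,S)` of `(X,μ,T)`, averages of
`f(Sⁿ y) u(n)` vanish for each multiplicative `u`, `|u| ≤ 1`, each continuous `f` of zero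
mean and each `y`. Then for every sequence `1 = b₁ < b₂ < ⋯` with `b_{k+1} - b_k → ∞`,
every sequence `(x_k)` of points of `X`, every multiplicative `u`, `|u| ≤ 1`, and every
continuous `f` with `∫ f dμ = 0`,
`(1/b_{K+1}) ∑_{1 ≤ k ≤ K} ∑_{b_k ≤ n < b_{k+1}} f(Tⁿ x_k) u(n) → 0`. -/
theorem sarnak_orbit_switching
    {X : Type u} [MetricSpace X] [CompactSpace X] [MeasurableSpace X] [BorelSpace X]
    (T : X → X) (hTcont : Continuous T) (μ : Measure X)
    (huniq : UniquelyErgodicWith T μ)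
    (hmodels : ∀ (Y : Type u) (_ : MetricSpace Y) (_ : CompactSpace Y)
      (_ : MeasurableSpace Y) (_ : BorelSpace Y) (S : Y → Y) (ν : Measure Y),
      Continuous S → UniquelyErgodicWith S ν → MeasureIso T μ S ν →
      ∀ u : ℕ → ℂ, (∀ m n : ℕ, Nat.Coprime m n → u (m * n) = u m * u n) →
        (∀ n, ‖u n‖ ≤ 1) →
        ∀ f : Y → ℂ, Continuous f → (∫ y, f y ∂ν) = 0 → ∀ y : Y,
          Tendsto (fun N : ℕ => (N : ℂ)⁻¹ * ∑ n ∈ Finset.Icc 1 N, f (S^[n] y) * u n)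
            atTop (nhds 0))
    (b : ℕ → ℕ) (hb1 : b 1 = 1) (hbmono : ∀ k ≥ 1, b k < b (k + 1))
    (hbgap : Tendsto (fun k : ℕ => b (k + 1) - b k) atTop atTop)
    (x : ℕ → X)
    (u : ℕ → ℂ) (hu_mult : ∀ m n : ℕ, Nat.Coprime m n → u (m * n) = u m * u n)
    (hu_bd : ∀ n, ‖u n‖ ≤ 1)
    (f : X → ℂ) (hf : Continuous f) (hf_int : (∫ z, f z ∂μ) = 0) :
    Tendsto (fun K : ℕ => (b (K + 1) : ℂ)⁻¹ *
        ∑ k ∈ Finset.Icc 1 K, ∑ n ∈ Finset.Ico (b k) (b (k + 1)), f (T^[n] (x k)) * u n)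
      atTop (nhds 0) := by
  exact sarnak_orbit_switching_general hTcont huniq
    (fun Y _ _ _ _ S ν hS hν hY => hmodels Y ‹_› ‹_› ‹_› ‹_› S ν hS hν hY u hu_mult hu_bd)
    hbgap x hf hf_int
end

section
/- Let u : ℕ → ℂ be a multiplicative function with |u(n)| ≤ 1 for all n. Let 1 = b₁ < b₂ < ⋯ be an increasing sequence of integers with b_{k+1} − b_k → ∞, and let P ∈ ℝ[x] be a non-constant polynomial whose leading coefficient is irrational. Then (1/b_{K+1}) Σ_{k ≤ K} | Σ_{b_k ≤ n < b_{k+1}} e^{2πi P(n)} u(n) | → 0 as K → ∞. -/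
open MeasureTheory Filter

/-!
Choose unimodular constants `c k` so that `c k` times the sum over the `k`-th block is its absolute
value. The claim then says that `u` is asymptotically orthogonal to `a n = c (k(n)) * e(P(n))`,
where `k(n)` is the index of the block containing `n`. By the Kátai–Bourgain–Sarnak–Ziegler
criterion it suffices that `∑_{m ≤ N} a(pm) * conj (a(qm)) = o(N)` for distinct primes `p`, `q`:
write `a n * u n` as an average over the primes `p ∣ n` in a fixed finite set (Turán–Kubilius),
replace `u (pm)` by `u p * u m`, and apply Cauchy–Schwarz to the sum over `m`.

The block lengths tend to infinity, so `m ↦ c (k(pm))` jumps `o(N)` times up to `N` and can be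
frozen on windows of bounded length. There, `P(pm) - P(qm)` has leading coefficient
`(p ^ d - q ^ d) * α` with `d = deg P ≥ 1` and `α` irrational, so Weyl differencing
(van der Corput's inequality) gives cancellation uniformly in the position of the window.
-/

open Asymptotics Finset Polynomial
open scoped ComplexConjugate FourierTransform InnerProductSpace

section AlmostOrthogonality

variable {α ι κ : Type*} {l : Filter α} {I : Finset ι} {d : ι → ℝ}

theorem eventually_sum_sum_norm_le {E : Type*} [NormedAddCommGroup E]
    {N : α → ℝ} (hN : ∀ x, 0 ≤ N x) {c : ι → ι → α → E}
    (hd : 0 < ∑ i ∈ I, d i) (hdiag : ∀ i ∈ I, ∀ x, ‖c i i x‖ ≤ d i * N x)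
    (hoff : ∀ i ∈ I, ∀ j ∈ I, i ≠ j → c i j =o[l] N) :
    ∀ᶠ x in l, ∑ i ∈ I, ∑ j ∈ I, ‖c i j x‖ ≤ 2 * (∑ i ∈ I, d i) * N x := by
  classical
  have small : (fun x ↦ ∑ i ∈ I, ∑ j ∈ I with i ≠ j, ‖c i j x‖) =o[l] N :=
    IsLittleO.fun_sum fun i hi ↦ IsLittleO.fun_sum fun j hj ↦
      (hoff i hi j (mem_filter.1 hj).1 (mem_filter.1 hj).2).norm_left
  filter_upwards [small.bound hd] with x hx
  rw [Real.norm_of_nonneg (by positivity), Real.norm_of_nonneg (hN x)] at hx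
  calc ∑ i ∈ I, ∑ j ∈ I, ‖c i j x‖
      = ∑ i ∈ I, (‖c i i x‖ + ∑ j ∈ I with i ≠ j, ‖c i j x‖) := by
        refine sum_congr rfl fun i hi ↦ ?_
        rw [← sum_filter_add_sum_filter_not I (i = ·), filter_eq I i, if_pos hi, sum_singleton]
    _ ≤ ∑ i ∈ I, d i * N x + (∑ i ∈ I, d i) * N x := by
        rw [sum_add_distrib]
        exact add_le_add (sum_le_sum fun i hi ↦ hdiag i hi x) hx
    _ = 2 * (∑ i ∈ I, d i) * N x := by
        rw [← sum_mul]
        ring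

variable (𝕜 : Type*) {E : Type*} [RCLike 𝕜] [NormedAddCommGroup E] [InnerProductSpace 𝕜 E]

theorem sq_sum_norm_sum_le (I : Finset ι) (T : Finset κ) (z : ι → κ → E) :
    (∑ n ∈ T, ‖∑ i ∈ I, z i n‖) ^ 2 ≤ #T * ∑ i ∈ I, ∑ j ∈ I, ‖∑ n ∈ T, ⟪z i n, z j n⟫_𝕜‖ := by
  refine sq_sum_le_card_mul_sum_sq.trans (mul_le_mul_of_nonneg_left ?_ (Nat.cast_nonneg _))
  have expand : ((∑ n ∈ T, ‖∑ i ∈ I, z i n‖ ^ 2 : ℝ) : 𝕜) =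
      ∑ i ∈ I, ∑ j ∈ I, ∑ n ∈ T, ⟪z i n, z j n⟫_𝕜 := by
    push_cast
    simp_rw [← inner_self_eq_norm_sq_to_K (𝕜 := 𝕜), sum_inner, inner_sum]
    rw [sum_comm]
    exact sum_congr rfl fun i _ ↦ sum_comm
  calc ∑ n ∈ T, ‖∑ i ∈ I, z i n‖ ^ 2 = ‖∑ i ∈ I, ∑ j ∈ I, ∑ n ∈ T, ⟪z i n, z j n⟫_𝕜‖ := by
        rw [← expand, RCLike.norm_of_nonneg (by positivity)]
    _ ≤ ∑ i ∈ I, ∑ j ∈ I, ‖∑ n ∈ T, ⟪z i n, z j n⟫_𝕜‖ :=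
        norm_sum_le_of_le _ fun i _ ↦ norm_sum_le _ _

theorem eventually_sum_norm_sum_le_sqrt {T : α → Finset κ} {z : α → ι → κ → E}
    (hd : 0 < ∑ i ∈ I, d i) (hdiag : ∀ i ∈ I, ∀ x, ∑ n ∈ T x, ‖z x i n‖ ^ 2 ≤ d i * #(T x))
    (hoff : ∀ i ∈ I, ∀ j ∈ I, i ≠ j →
      (fun x ↦ ∑ n ∈ T x, ⟪z x i n, z x j n⟫_𝕜) =o[l] fun x ↦ (#(T x) : ℝ)) :
    ∀ᶠ x in l, ∑ n ∈ T x, ‖∑ i ∈ I, z x i n‖ ≤ √(2 * ∑ i ∈ I, d i) * #(T x) := by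
  have hdiag' : ∀ i ∈ I, ∀ x, ‖∑ n ∈ T x, ⟪z x i n, z x i n⟫_𝕜‖ ≤ d i * #(T x) := fun i hi x ↦
    (norm_sum_le_of_le _ fun n _ ↦ (by rw [inner_self_eq_norm_sq_to_K]; simp)).trans (hdiag i hi x)
  filter_upwards [eventually_sum_sum_norm_le (fun x ↦ Nat.cast_nonneg _) hd hdiag' hoff] with x hx
  refine abs_le_of_sq_le_sq' ?_ (by positivity) |>.2
  calc (∑ n ∈ T x, ‖∑ i ∈ I, z x i n‖) ^ 2
      ≤ #(T x) * ∑ i ∈ I, ∑ j ∈ I, ‖∑ n ∈ T x, ⟪z x i n, z x j n⟫_𝕜‖ := sq_sum_norm_sum_le 𝕜 ..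
    _ ≤ #(T x) * (2 * (∑ i ∈ I, d i) * #(T x)) := by gcongr
    _ = (√(2 * ∑ i ∈ I, d i) * #(T x)) ^ 2 := by
        rw [mul_pow, Real.sq_sqrt (by positivity)]
        ring

end AlmostOrthogonality

section VanDerCorput

variable {E : Type*} [NormedAddCommGroup E]

theorem sum_range_shift_sub_sum_range {M : Type*} [AddCommGroup M] (z : ℕ → M) (N h : ℕ) :
    ∑ n ∈ range N, z (n + h) - ∑ n ∈ range N, z n =
      ∑ j ∈ range h, z (N + j) - ∑ j ∈ range h, z j := by
  have swap := sum_range_add z N h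
  rw [add_comm N h, sum_range_add] at swap
  simp only [add_comm _ h]
  rw [sub_eq_sub_iff_add_eq_add, add_comm, swap, add_comm]

theorem norm_sum_range_add_sub_le {z : ℕ → E} (hz : ∀ n, ‖z n‖ ≤ 1) (N h : ℕ) :
    ‖∑ n ∈ range N, z (n + h) - ∑ n ∈ range N, z n‖ ≤ 2 * h := by
  rw [sum_range_shift_sub_sum_range, ← sum_sub_distrib]
  refine (norm_sum_le_of_le _ fun j _ ↦ norm_sub_le_of_le (hz _) (hz _)).trans_eq ?_
  rw [sum_const, card_range, nsmul_eq_mul]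
  ring

theorem mul_norm_sum_range_le [NormedSpace ℝ E] {z : ℕ → E} (hz : ∀ n, ‖z n‖ ≤ 1) (N R : ℕ) :
    R * ‖∑ n ∈ range N, z n‖ ≤
      2 * (R : ℝ) ^ 2 + ∑ n ∈ range N, ‖∑ h ∈ range R, z (n + h)‖ := by
  have average : R • ∑ n ∈ range N, z n = ∑ n ∈ range N, ∑ h ∈ range R, z (n + h) -
      ∑ h ∈ range R, (∑ n ∈ range N, z (n + h) - ∑ n ∈ range N, z n) := by
    rw [sum_sub_distrib, sum_comm, sum_const, card_range, sub_sub_cancel]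
  have error : ‖∑ h ∈ range R, (∑ n ∈ range N, z (n + h) - ∑ n ∈ range N, z n)‖ ≤
      2 * (R : ℝ) ^ 2 := by
    calc _ ≤ ∑ _h ∈ range R, 2 * (R : ℝ) := norm_sum_le_of_le _ fun h hh ↦
          (norm_sum_range_add_sub_le hz N h).trans (by gcongr; exact (mem_range.1 hh).le)
      _ = 2 * (R : ℝ) ^ 2 := by
          rw [sum_const, card_range, nsmul_eq_mul]
          ring
  calc R * ‖∑ n ∈ range N, z n‖ = ‖R • ∑ n ∈ range N, z n‖ := by
        rw [RCLike.norm_nsmul ℝ, nsmul_eq_mul]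
    _ ≤ ‖∑ n ∈ range N, ∑ h ∈ range R, z (n + h)‖ + 2 * (R : ℝ) ^ 2 := by
        rw [average]
        exact (norm_sub_le _ _).trans (by gcongr)
    _ ≤ 2 * (R : ℝ) ^ 2 + ∑ n ∈ range N, ‖∑ h ∈ range R, z (n + h)‖ := by
        rw [add_comm]
        gcongr
        exact norm_sum_le _ _

theorem isLittleO_const_natCast {α : Type*} {l : Filter α} {N : α → ℕ} (hN : Tendsto N l atTop)
    (c : E) : (fun _ ↦ c) =o[l] fun x ↦ (N x : ℝ) :=
  isLittleO_const_left.2 <| .inr <|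
    tendsto_norm_atTop_atTop.comp (tendsto_natCast_atTop_atTop.comp hN)

theorem isLittleO_sum_range_of_inner_shift (𝕜 : Type*) [RCLike 𝕜] [InnerProductSpace 𝕜 E]
    {α : Type*} {l : Filter α} {N : α → ℕ} (hN : Tendsto N l atTop) {z : α → ℕ → E}
    (hz : ∀ x n, ‖z x n‖ ≤ 1)
    (hcorr : ∀ r s, r ≠ s →
      (fun x ↦ ∑ n ∈ range (N x), ⟪z x (n + r), z x (n + s)⟫_𝕜) =o[l] fun x ↦ (N x : ℝ)) :
    (fun x ↦ ∑ n ∈ range (N x), z x n) =o[l] fun x ↦ (N x : ℝ) := by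
  let _ : NormedSpace ℝ E := NormedSpace.restrictScalars ℝ 𝕜 E
  refine isLittleO_iff.2 fun ε hε ↦ ?_
  obtain ⟨R, hR⟩ := exists_nat_gt (8 / ε ^ 2)
  have hRpos : (0 : ℝ) < R := lt_trans (by positivity) hR
  have sqrt_le : √(2 * R) ≤ ε / 2 * R := by
    rw [div_lt_iff₀ (by positivity)] at hR
    refine Real.sqrt_le_left (by positivity) |>.2 ?_
    nlinarith
  have translates : ∀ᶠ x in l, ∑ n ∈ range (N x), ‖∑ h ∈ range R, z x (n + h)‖ ≤
      √(2 * R) * N x := by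
    simpa using eventually_sum_norm_sum_le_sqrt 𝕜 (I := range R) (d := fun _ ↦ 1)
      (T := fun x ↦ range (N x)) (z := fun x h n ↦ z x (n + h)) (by simpa using hRpos)
      (fun i _ x ↦ by
        simpa using sum_le_card_nsmul (range (N x)) (fun n ↦ ‖z x (n + i)‖ ^ 2) 1
          fun n _ ↦ pow_le_one₀ (norm_nonneg _) (hz _ _))
      (fun r _ s _ hrs ↦ by simpa using hcorr r s hrs)
  filter_upwards [translates, (isLittleO_const_natCast hN (2 * R : ℝ)).bound (half_pos hε)]
    with x hx hRx
  rw [Real.norm_of_nonneg (by positivity), RCLike.norm_natCast] at hRx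
  rw [RCLike.norm_natCast, ← mul_le_mul_iff_right₀ hRpos]
  calc R * ‖∑ n ∈ range (N x), z x n‖ ≤ 2 * (R : ℝ) ^ 2 + √(2 * R) * N x :=
        (mul_norm_sum_range_le (hz x) (N x) R).trans (by gcongr)
    _ ≤ R * (ε / 2 * N x) + ε / 2 * R * N x := by
        rw [sq, mul_left_comm]
        gcongr
    _ = R * (ε * N x) := by ring

end VanDerCorput

section Weyl

theorem fourierChar_ne_one_of_irrational {α : ℝ} (hα : Irrational α) : (𝐞 α : ℂ) ≠ 1 := by
  rw [Real.fourierChar_apply, Ne, Complex.exp_eq_one_iff]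
  rintro ⟨n, hn⟩
  refine hα.ne_int n (Complex.ofReal_injective (mul_left_cancel₀ Complex.two_pi_I_ne_zero ?_))
  push_cast at hn ⊢
  linear_combination hn

theorem fourierChar_sub (x y : ℝ) : (𝐞 (x - y) : ℂ) = 𝐞 x * conj (𝐞 y : ℂ) := by
  rw [AddChar.map_sub_eq_div, Circle.coe_div, ← Circle.coe_inv_eq_conj, Circle.coe_inv,
    div_eq_mul_inv]

theorem norm_geom_sum_le {K : Type*} [NormedDivisionRing K] {ζ : K} (hζ : ‖ζ‖ = 1)
    (hζ1 : ζ ≠ 1) (N : ℕ) :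
    ‖∑ n ∈ range N, ζ ^ n‖ ≤ 2 / ‖ζ - 1‖ := by
  rw [geom_sum_eq hζ1, norm_div]
  gcongr
  calc ‖ζ ^ N - 1‖ ≤ ‖ζ ^ N‖ + ‖(1 : K)‖ := norm_sub_le _ _
    _ = 2 := by
      rw [norm_pow, hζ]
      norm_num

theorem coeff_taylor_of_natDegree_le {R : Type*} [CommSemiring R] {Q : R[X]} {d : ℕ}
    (hQ : Q.natDegree ≤ d) (r : R) : (taylor r Q).coeff d = Q.coeff d := by
  rcases hQ.lt_or_eq with hlt | rfl
  · rw [coeff_eq_zero_of_natDegree_lt hlt, coeff_eq_zero_of_natDegree_lt]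
    rwa [natDegree_taylor]
  · exact coeff_taylor_natDegree r Q

theorem coeff_taylor_of_natDegree_le_succ {R : Type*} [CommSemiring R] {Q : R[X]} {d : ℕ}
    (hQ : Q.natDegree ≤ d + 1) (r : R) :
    (taylor r Q).coeff d = Q.coeff d + (d + 1) * Q.coeff (d + 1) * r := by
  have hdeg : (hasseDeriv d Q).natDegree < 2 := (natDegree_hasseDeriv_le Q d).trans_lt (by omega)
  rw [taylor_coeff, eval_eq_sum_range' hdeg]
  simp [sum_range_succ, hasseDeriv_coeff, add_comm 1 d]

theorem natDegree_taylor_sub_taylor_le {R : Type*} [CommRing R] {Q : R[X]} {d : ℕ}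
    (hQ : Q.natDegree ≤ d + 1) (r s : R) : (taylor r Q - taylor s Q).natDegree ≤ d := by
  refine natDegree_le_iff_coeff_eq_zero.2 fun n hn ↦ ?_
  rw [coeff_sub, coeff_taylor_of_natDegree_le (hQ.trans hn),
    coeff_taylor_of_natDegree_le (hQ.trans hn), sub_self]

theorem coeff_taylor_sub_taylor {R : Type*} [CommRing R] {Q : R[X]} {d : ℕ}
    (hQ : Q.natDegree ≤ d + 1) (r s : R) :
    (taylor r Q - taylor s Q).coeff d = (d + 1) * Q.coeff (d + 1) * (r - s) := by
  rw [coeff_sub, coeff_taylor_of_natDegree_le_succ hQ, coeff_taylor_of_natDegree_le_succ hQ]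
  ring

variable {ι : Type*} {l : Filter ι} {N : ι → ℕ} {Q : ι → ℝ[X]} {α : ℝ}

theorem isLittleO_sum_range_fourierChar_of_natDegree_le_one (hN : Tendsto N l atTop)
    (hdeg : ∀ x, (Q x).natDegree ≤ 1) (hα : Irrational α) (hcoeff : ∀ x, (Q x).coeff 1 = α) :
    (fun x ↦ ∑ n ∈ range (N x), (𝐞 ((Q x).eval (n : ℝ)) : ℂ)) =o[l] fun x ↦ (N x : ℝ) := by
  have eval_eq (x : ι) (n : ℕ) : (𝐞 ((Q x).eval (n : ℝ)) : ℂ) =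
      (𝐞 α : ℂ) ^ n * 𝐞 ((Q x).coeff 0) := by
    rw [← Circle.coe_pow, ← AddChar.map_nsmul_eq_pow, ← Circle.coe_mul, ← AddChar.map_add_eq_mul,
      eval_eq_sum_range' (Nat.lt_succ_of_le (hdeg x)), sum_range_succ, sum_range_one, hcoeff,
      nsmul_eq_mul]
    ring_nf
  refine IsBigO.trans_isLittleO (.of_bound' (.of_forall fun x ↦ ?_))
    (isLittleO_const_natCast hN (2 / ‖(𝐞 α : ℂ) - 1‖))
  simp_rw [eval_eq, ← sum_mul]
  rw [norm_mul, Circle.norm_coe, mul_one, Real.norm_of_nonneg (by positivity)]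
  exact norm_geom_sum_le (Circle.norm_coe _) (fourierChar_ne_one_of_irrational hα) (N x)

theorem isLittleO_sum_range_fourierChar (hN : Tendsto N l atTop) {d : ℕ}
    (hdeg : ∀ x, (Q x).natDegree ≤ d + 1) (hα : Irrational α)
    (hcoeff : ∀ x, (Q x).coeff (d + 1) = α) :
    (fun x ↦ ∑ n ∈ range (N x), (𝐞 ((Q x).eval (n : ℝ)) : ℂ)) =o[l] fun x ↦ (N x : ℝ) := by
  induction d generalizing Q α with
  | zero => exact isLittleO_sum_range_fourierChar_of_natDegree_le_one hN hdeg hα hcoeff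
  | succ d ih =>
    refine isLittleO_sum_range_of_inner_shift ℂ hN (fun _ _ ↦ (Circle.norm_coe _).le)
      fun r s hrs ↦ ?_
    have irrational : Irrational (((d + 1 : ℕ) + 1) * α * ((s : ℝ) - r)) := by
      convert hα.intCast_mul (m := (d + 2) * ((s : ℤ) - r))
        (mul_ne_zero (by omega) (by omega)) using 1
      push_cast
      ring
    refine (ih (Q := fun x ↦ taylor (s : ℝ) (Q x) - taylor (r : ℝ) (Q x))
      (fun x ↦ natDegree_taylor_sub_taylor_le (hdeg x) _ _) irrational
      (fun x ↦ by rw [coeff_taylor_sub_taylor (hdeg x), hcoeff])).congr_left fun x ↦ ?_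
    simp only [RCLike.inner_apply, eval_sub, taylor_eval, fourierChar_sub, Nat.cast_add]

end Weyl

section UniformMeanZero

/-- The averages of `w` over intervals of length `N` tend to zero as `N → ∞`, uniformly in the
position of the interval. -/
def HasUniformMeanZero {E : Type*} [NormedAddCommGroup E] (w : ℕ → E) : Prop :=
  (fun x : ℕ × ℕ ↦ ∑ n ∈ range x.2, w (x.1 + n)) =o[⊤ ×ˢ atTop] fun x ↦ (x.2 : ℝ)

theorem HasUniformMeanZero.eventually_norm_sum_le {E : Type*} [NormedAddCommGroup E] {w : ℕ → E}
    (hw : HasUniformMeanZero w) {ε : ℝ} (hε : 0 < ε) :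
    ∀ᶠ N : ℕ in atTop, ∀ x, ‖∑ n ∈ range N, w (x + n)‖ ≤ ε * N := by
  have := hw.bound hε
  rw [top_prod, eventually_comap] at this
  filter_upwards [this] with N hN x
  simpa using hN (x, N) rfl

theorem hasUniformMeanZero_fourierChar {Q : ℝ[X]} {d : ℕ} (hd : d ≠ 0) (hdeg : Q.natDegree ≤ d)
    (hirr : Irrational (Q.coeff d)) :
    HasUniformMeanZero fun n ↦ (𝐞 (Q.eval (n : ℝ)) : ℂ) := by
  obtain ⟨d, rfl⟩ := Nat.exists_eq_succ_of_ne_zero hd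
  refine (isLittleO_sum_range_fourierChar tendsto_snd (Q := fun x : ℕ × ℕ ↦ taylor (x.1 : ℝ) Q)
    (fun _ ↦ by rwa [natDegree_taylor]) hirr
    (fun _ ↦ coeff_taylor_of_natDegree_le hdeg _)).congr_left fun x ↦ ?_
  simp only [taylor_eval, Nat.cast_add, add_comm]

theorem isLittleO_sum_range_add_iff {E : Type*} [NormedAddCommGroup E] {z : ℕ → E} (h : ℕ) :
    ((fun N ↦ ∑ n ∈ range N, z (n + h)) =o[atTop] fun N : ℕ ↦ (N : ℝ)) ↔
      (fun N ↦ ∑ n ∈ range N, z n) =o[atTop] fun N : ℕ ↦ (N : ℝ) := by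
  have size : (fun N : ℕ ↦ ((N + h : ℕ) : ℝ)) =Θ[atTop] fun N : ℕ ↦ (N : ℝ) := by
    push_cast
    exact IsLittleO.right_isTheta_add' (isLittleO_const_natCast tendsto_id (h : ℝ)) |>.symm
  have shift (N : ℕ) :
      ∑ n ∈ range (N + h), z n = ∑ n ∈ range N, z (n + h) + ∑ n ∈ range h, z n := by
    rw [add_comm N, sum_range_add, add_comm]
    simp only [add_comm h]
  conv_rhs => rw [← map_add_atTop_eq_nat h, isLittleO_map]
  refine Iff.trans ?_ size.symm.isLittleO_congr_right
  simp only [Function.comp_def, shift]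
  exact (IsLittleO.add_iff_left (isLittleO_const_natCast tendsto_id _)).symm

theorem isLittleO_sum_Ioc_iff {E : Type*} [NormedAddCommGroup E] {z : ℕ → E} :
    ((fun N ↦ ∑ n ∈ Ioc 0 N, z n) =o[atTop] fun N : ℕ ↦ (N : ℝ)) ↔
      (fun N ↦ ∑ n ∈ range N, z n) =o[atTop] fun N : ℕ ↦ (N : ℝ) := by
  rw [← isLittleO_sum_range_add_iff 1]
  simp only [range_eq_Ico, sum_Ico_add', zero_add]
  rfl

/-- The total variation of `g` on `[0, N]` is `o(N)`. -/
def HasSublinearVariation {E : Type*} [NormedAddCommGroup E] (g : ℕ → E) : Prop :=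
  (fun N ↦ ∑ n ∈ range N, ‖g (n + 1) - g n‖) =o[atTop] fun N : ℕ ↦ (N : ℝ)

namespace HasSublinearVariation

theorem isLittleO_sum_norm_add_sub {E : Type*} [NormedAddCommGroup E] {g : ℕ → E}
    (hg : HasSublinearVariation g) (h : ℕ) :
    (fun N ↦ ∑ n ∈ range N, ‖g (n + h) - g n‖) =o[atTop] fun N : ℕ ↦ (N : ℝ) := by
  induction h with
  | zero => simp
  | succ h ih =>
    refine IsBigO.trans_isLittleO (.of_norm_le fun N ↦ ?_)
      (((isLittleO_sum_range_add_iff h).2 hg).add ih)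
    rw [← sum_add_distrib, Real.norm_of_nonneg (by positivity)]
    gcongr with n
    rw [← add_assoc, add_right_comm]
    exact norm_sub_le_norm_sub_add_norm_sub ..

theorem mul {A : Type*} [NormedRing A] {f g : ℕ → A} (hf : HasSublinearVariation f)
    (hg : HasSublinearVariation g) (hf1 : ∀ n, ‖f n‖ ≤ 1) (hg1 : ∀ n, ‖g n‖ ≤ 1) :
    HasSublinearVariation fun n ↦ f n * g n := by
  refine IsBigO.trans_isLittleO (.of_norm_le fun N ↦ ?_) (hf.add hg)
  rw [← sum_add_distrib, Real.norm_of_nonneg (by positivity)]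
  gcongr with n
  calc ‖f (n + 1) * g (n + 1) - f n * g n‖
      = ‖(f (n + 1) - f n) * g (n + 1) + f n * (g (n + 1) - g n)‖ := by
        rw [sub_mul, mul_sub, sub_add_sub_cancel]
    _ ≤ ‖f (n + 1) - f n‖ * 1 + 1 * ‖g (n + 1) - g n‖ :=
        norm_add_le_of_le (norm_mul_le_of_le le_rfl (hg1 _)) (norm_mul_le_of_le (hf1 _) le_rfl)
    _ = ‖f (n + 1) - f n‖ + ‖g (n + 1) - g n‖ := by rw [mul_one, one_mul]

theorem star {𝕜 : Type*} [RCLike 𝕜] {g : ℕ → 𝕜} (hg : HasSublinearVariation g) :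
    HasSublinearVariation fun n ↦ conj (g n) := by
  simpa only [HasSublinearVariation, ← map_sub, RCLike.norm_conj] using hg

theorem comp_of_monotone {E : Type*} [NormedAddCommGroup E] {c : ℕ → E} {κ : ℕ → ℕ}
    (hc : ∀ k, ‖c k‖ ≤ 1) (hκ : Monotone κ)
    (hκo : (fun n ↦ (κ n : ℝ)) =o[atTop] fun n : ℕ ↦ (n : ℝ)) :
    HasSublinearVariation fun n ↦ c (κ n) := by
  have jump (n : ℕ) : ‖c (κ (n + 1)) - c (κ n)‖ ≤ 2 * ((κ (n + 1) : ℝ) - κ n) := by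
    rcases (hκ n.le_succ).eq_or_lt with heq | hlt
    · simp [heq]
    · have : (κ n : ℝ) + 1 ≤ κ (n + 1) := mod_cast hlt
      linarith [norm_sub_le_of_le (hc (κ (n + 1))) (hc (κ n))]
  refine IsBigO.trans_isLittleO (.of_norm_le fun N ↦ ?_) (hκo.const_mul_left 2)
  calc ‖∑ n ∈ range N, ‖c (κ (n + 1)) - c (κ n)‖‖
      ≤ ∑ n ∈ range N, 2 * ((κ (n + 1) : ℝ) - κ n) := by
        rw [Real.norm_of_nonneg (by positivity)]
        exact sum_le_sum fun n _ ↦ jump n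
    _ = 2 * (κ N - κ 0) := by rw [← mul_sum, sum_range_sub fun n ↦ (κ n : ℝ)]
    _ ≤ 2 * κ N := by linarith [(κ 0).cast_nonneg (α := ℝ)]

end HasSublinearVariation

theorem HasUniformMeanZero.isLittleO_sum_mul {A : Type*} [NormedRing A] [NormedAlgebra ℝ A]
    {g w : ℕ → A} (hw : HasUniformMeanZero w) (hg1 : ∀ n, ‖g n‖ ≤ 1) (hw1 : ∀ n, ‖w n‖ ≤ 1)
    (hg : HasSublinearVariation g) :
    (fun N ↦ ∑ n ∈ range N, g n * w n) =o[atTop] fun N : ℕ ↦ (N : ℝ) := by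
  refine isLittleO_iff.2 fun ε hε ↦ ?_
  obtain ⟨H, hH, hHpos⟩ :=
    ((hw.eventually_norm_sum_le (half_pos hε)).and (eventually_gt_atTop 0)).exists
  have block (n : ℕ) : ‖∑ h ∈ range H, g (n + h) * w (n + h)‖ ≤
      ∑ h ∈ range H, ‖g (n + h) - g n‖ + ε / 2 * H := by
    have freeze : ∑ h ∈ range H, g (n + h) * w (n + h) =
        ∑ h ∈ range H, (g (n + h) - g n) * w (n + h) + g n * ∑ h ∈ range H, w (n + h) := by
      rw [mul_sum, ← sum_add_distrib]
      exact sum_congr rfl fun h _ ↦ by rw [sub_mul, sub_add_cancel]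
    rw [freeze]
    exact norm_add_le_of_le
      (norm_sum_le_of_le _ fun h _ ↦ (norm_mul_le_of_le le_rfl (hw1 _)).trans_eq (mul_one _))
      ((norm_mul_le_of_le (hg1 n) (hH n)).trans_eq (one_mul _))
  have error : (fun N ↦ 2 * (H : ℝ) ^ 2 + ∑ h ∈ range H, ∑ n ∈ range N, ‖g (n + h) - g n‖)
      =o[atTop] fun N : ℕ ↦ (N : ℝ) :=
    (isLittleO_const_natCast tendsto_id _).add
      (.fun_sum fun h _ ↦ hg.isLittleO_sum_norm_add_sub h)
  have hHpos' : (0 : ℝ) < H := Nat.cast_pos.2 hHpos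
  filter_upwards [error.bound (c := ε / 2 * H) (by positivity)] with N hN
  rw [Real.norm_of_nonneg (by positivity), RCLike.norm_natCast] at hN
  rw [RCLike.norm_natCast, ← mul_le_mul_iff_right₀ hHpos']
  calc H * ‖∑ n ∈ range N, g n * w n‖
      ≤ 2 * (H : ℝ) ^ 2 + ∑ n ∈ range N, ‖∑ h ∈ range H, g (n + h) * w (n + h)‖ :=
        mul_norm_sum_range_le (fun n ↦ (norm_mul_le_of_le (hg1 n) (hw1 n)).trans_eq (one_mul _)) N H
    _ ≤ 2 * (H : ℝ) ^ 2 + ∑ n ∈ range N, (∑ h ∈ range H, ‖g (n + h) - g n‖ + ε / 2 * H) := by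
        gcongr with n
        exact block n
    _ = 2 * (H : ℝ) ^ 2 + ∑ h ∈ range H, ∑ n ∈ range N, ‖g (n + h) - g n‖ + ε / 2 * H * N := by
        rw [sum_add_distrib, sum_comm, sum_const, card_range, nsmul_eq_mul]
        ring
    _ ≤ ε / 2 * H * N + ε / 2 * H * N := by gcongr
    _ = H * (ε * N) := by ring

end UniformMeanZero

section TuranKubilius

theorem sum_card_filter_dvd (I : Finset ℕ) (N : ℕ) :
    ∑ n ∈ Ioc 0 N, #{p ∈ I | p ∣ n} = ∑ p ∈ I, N / p := by
  rw [sum_congr rfl fun p _ ↦ (Nat.Ioc_filter_dvd_card_eq_div N p).symm]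
  exact sum_card_bipartiteAbove_eq_sum_card_bipartiteBelow fun n p ↦ p ∣ n

theorem sum_sq_card_filter_dvd (I : Finset ℕ) (N : ℕ) :
    ∑ n ∈ Ioc 0 N, #{p ∈ I | p ∣ n} ^ 2 = ∑ p ∈ I, ∑ q ∈ I, N / p.lcm q := by
  have square (n : ℕ) : #{p ∈ I | p ∣ n} ^ 2 = #{x ∈ I ×ˢ I | x.1.lcm x.2 ∣ n} := by
    simp_rw [sq, ← card_product, ← filter_product, Nat.lcm_dvd_iff]
  rw [sum_congr rfl fun n _ ↦ square n, ← sum_product',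
    sum_congr rfl fun (x : ℕ × ℕ) _ ↦ (Nat.Ioc_filter_dvd_card_eq_div N (x.1.lcm x.2)).symm]
  exact sum_card_bipartiteAbove_eq_sum_card_bipartiteBelow fun n (x : ℕ × ℕ) ↦ x.1.lcm x.2 ∣ n

theorem mul_sum_one_div_sub_card_le (I : Finset ℕ) (N : ℕ) :
    N * ∑ p ∈ I, (1 : ℝ) / p - #I ≤ ((∑ p ∈ I, N / p : ℕ) : ℝ) := by
  rw [mul_sum, card_eq_sum_ones]
  push_cast
  rw [← sum_sub_distrib]
  refine sum_le_sum fun p _ ↦ ?_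
  rw [mul_one_div, ← Nat.floor_div_eq_div (K := ℝ)]
  exact (Nat.sub_one_lt_floor _).le

theorem sum_sum_div_lcm_le {I : Finset ℕ} (hI : (I : Set ℕ).Pairwise Nat.Coprime) (N : ℕ) :
    ((∑ p ∈ I, ∑ q ∈ I, N / p.lcm q : ℕ) : ℝ) ≤
      N * (∑ p ∈ I, (1 : ℝ) / p) ^ 2 + N * ∑ p ∈ I, (1 : ℝ) / p := by
  have term {p q : ℕ} (hp : p ∈ I) (hq : q ∈ I) : ((N / p.lcm q : ℕ) : ℝ) ≤
      N * ((1 : ℝ) / p * (1 / q)) + if p = q then N * ((1 : ℝ) / p) else 0 := by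
    refine Nat.cast_div_le.trans ?_
    split_ifs with hpq
    · rw [hpq, Nat.lcm_self, mul_one_div (N : ℝ)]
      exact le_add_of_nonneg_left (by positivity)
    · rw [(hI hp hq hpq).lcm_eq_mul, Nat.cast_mul, one_div_mul_one_div, mul_one_div, add_zero]
  push_cast
  refine (sum_le_sum fun p hp ↦ sum_le_sum fun q hq ↦ term hp hq).trans_eq ?_
  simp_rw [sum_add_distrib, ← mul_sum, ← sum_mul, sum_ite_eq]
  rw [sum_ite_mem, inter_self, ← mul_sum, sq]

theorem sum_sq_card_filter_dvd_sub_le {I : Finset ℕ} (hI : (I : Set ℕ).Pairwise Nat.Coprime)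
    (N : ℕ) :
    ∑ n ∈ Ioc 0 N, (#{p ∈ I | p ∣ n} - ∑ p ∈ I, (1 : ℝ) / p) ^ 2 ≤
      (∑ p ∈ I, (1 : ℝ) / p) * (N + 2 * #I) := by
  set L := ∑ p ∈ I, (1 : ℝ) / p
  have first : N * L - #I ≤ ∑ n ∈ Ioc 0 N, (#{p ∈ I | p ∣ n} : ℝ) := by
    rw [← Nat.cast_sum, sum_card_filter_dvd]
    exact mul_sum_one_div_sub_card_le I N
  have second : ∑ n ∈ Ioc 0 N, (#{p ∈ I | p ∣ n} : ℝ) ^ 2 ≤ N * L ^ 2 + N * L := by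
    simp_rw [← Nat.cast_pow]
    rw [← Nat.cast_sum, sum_sq_card_filter_dvd]
    exact sum_sum_div_lcm_le hI N
  calc ∑ n ∈ Ioc 0 N, (#{p ∈ I | p ∣ n} - L) ^ 2
      = ∑ n ∈ Ioc 0 N, (#{p ∈ I | p ∣ n} : ℝ) ^ 2
          - 2 * (∑ n ∈ Ioc 0 N, (#{p ∈ I | p ∣ n} : ℝ)) * L + N * L ^ 2 := by
        simp_rw [sub_sq, sum_add_distrib, sum_sub_distrib, ← sum_mul, ← mul_sum]
        rw [sum_const, Nat.card_Ioc, nsmul_eq_mul, Nat.sub_zero]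
    _ ≤ N * L ^ 2 + N * L - 2 * (N * L - #I) * L + N * L ^ 2 := by gcongr
    _ = L * (N + 2 * #I) := by ring

theorem eventually_sum_abs_card_filter_dvd_sub_le {I : Finset ℕ}
    (hI : (I : Set ℕ).Pairwise Nat.Coprime) :
    ∀ᶠ N : ℕ in atTop, ∑ n ∈ Ioc 0 N, |#{p ∈ I | p ∣ n} - ∑ p ∈ I, (1 : ℝ) / p| ≤
      √(2 * ∑ p ∈ I, (1 : ℝ) / p) * N := by
  filter_upwards [eventually_ge_atTop (2 * #I)] with N hN
  set L := ∑ p ∈ I, (1 : ℝ) / p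
  have hN' : (2 * #I : ℝ) ≤ N := mod_cast hN
  refine abs_le_of_sq_le_sq' ?_ (by positivity) |>.2
  calc (∑ n ∈ Ioc 0 N, |#{p ∈ I | p ∣ n} - L|) ^ 2
      ≤ N * ∑ n ∈ Ioc 0 N, (#{p ∈ I | p ∣ n} - L) ^ 2 := by
        simpa using sq_sum_le_card_mul_sum_sq (s := Ioc 0 N) (f := fun n ↦ |#{p ∈ I | p ∣ n} - L|)
    _ ≤ N * (L * (N + 2 * #I)) := by gcongr; exact sum_sq_card_filter_dvd_sub_le hI N
    _ ≤ N * (L * (N + N)) := by gcongr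
    _ = (√(2 * L) * N) ^ 2 := by
        rw [mul_pow, Real.sq_sqrt (by positivity)]
        ring

theorem exists_finset_primes_le_sum_one_div (M : ℝ) :
    ∃ I : Finset ℕ, (∀ p ∈ I, p.Prime) ∧ M ≤ ∑ p ∈ I, (1 : ℝ) / p := by
  by_contra! h
  refine not_summable_one_div_on_primes (summable_of_sum_le (c := M)
    (fun n ↦ Set.indicator_nonneg (fun _ _ ↦ by positivity) n) fun S ↦ ?_)
  simp only [Set.indicator_apply, Set.mem_ofPred_eq]
  rw [← sum_filter]
  exact (h _ fun p hp ↦ (mem_filter.1 hp).2).le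

end TuranKubilius

section KataiBourgainSarnakZiegler

theorem image_mul_Ioc_div {p : ℕ} (hp : p ≠ 0) (N : ℕ) :
    (Ioc 0 (N / p)).image (p * ·) = {n ∈ Ioc 0 N | p ∣ n} := by
  ext n
  simp only [mem_image, mem_filter, mem_Ioc, Nat.le_div_iff_mul_le hp.pos]
  constructor
  · rintro ⟨m, ⟨hm, hmN⟩, rfl⟩
    exact ⟨⟨Nat.mul_pos hp.pos hm, mul_comm p m ▸ hmN⟩, dvd_mul_right p m⟩
  · rintro ⟨⟨hn, hnN⟩, m, rfl⟩
    exact ⟨m, ⟨Nat.pos_of_mul_pos_left hn, mul_comm p m ▸ hnN⟩, rfl⟩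

theorem sum_filter_dvd {M : Type*} [AddCommMonoid M] {p : ℕ} (hp : p ≠ 0) (N : ℕ) (f : ℕ → M) :
    ∑ n ∈ Ioc 0 N with p ∣ n, f n = ∑ m ∈ Ioc 0 (N / p), f (p * m) := by
  rw [← image_mul_Ioc_div hp, sum_image (mul_right_injective₀ hp).injOn]

theorem filter_mul_le_Ioc {p : ℕ} (hp : p ≠ 0) (N : ℕ) :
    {m ∈ Ioc 0 N | p * m ≤ N} = Ioc 0 (N / p) := by
  ext m
  simp only [mem_filter, mem_Ioc, Nat.le_div_iff_mul_le hp.pos, mul_comm m]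
  exact ⟨fun h ↦ ⟨h.1.1, h.2⟩, fun h ↦ ⟨⟨h.1, (Nat.le_mul_of_pos_left m hp.pos).trans h.2⟩, h.2⟩⟩

theorem isLittleO_comp_div {E : Type*} [NormedAddCommGroup E] {f : ℕ → E}
    (hf : f =o[atTop] fun N : ℕ ↦ (N : ℝ)) {r : ℕ} (hr : r ≠ 0) :
    (fun N ↦ f (N / r)) =o[atTop] fun N : ℕ ↦ (N : ℝ) :=
  (hf.comp_tendsto (Nat.tendsto_div_const_atTop hr)).trans_isBigO <| .of_bound' <|
    .of_forall fun N ↦ by simpa using Nat.div_le_self N r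

variable {𝕜 : Type*} [RCLike 𝕜] {a u : ℕ → 𝕜}

theorem norm_sum_mul_apply_prime_mul_sub_le (ha : ∀ n, ‖a n‖ ≤ 1) (hu : ∀ n, ‖u n‖ ≤ 1)
    (hu_mult : ∀ m n, Nat.Coprime m n → u (m * n) = u m * u n) {p : ℕ} (hp : p.Prime) (M : ℕ) :
    ‖∑ m ∈ Ioc 0 M, a m * u (p * m) - ∑ m ∈ Ioc 0 M, a m * (u p * u m)‖ ≤ 2 * (M / p : ℕ) := by
  have defect (m : ℕ) : ‖a m * u (p * m) - a m * (u p * u m)‖ ≤ if p ∣ m then 2 else 0 := by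
    split_ifs with hpm
    · have hpum : ‖u p * u m‖ ≤ 1 := (norm_mul_le_of_le (hu p) (hu m)).trans_eq (one_mul 1)
      calc ‖a m * u (p * m) - a m * (u p * u m)‖ ≤ 1 * 1 + 1 * 1 :=
            norm_sub_le_of_le (norm_mul_le_of_le (ha m) (hu _)) (norm_mul_le_of_le (ha m) hpum)
        _ = 2 := by norm_num
    · rw [hu_mult p m ((Nat.Prime.coprime_iff_not_dvd hp).2 hpm), sub_self, norm_zero]
  rw [← sum_sub_distrib]
  refine (norm_sum_le_of_le _ fun m _ ↦ defect m).trans_eq ?_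
  rw [← sum_filter, sum_const, Nat.Ioc_filter_dvd_card_eq_div, nsmul_eq_mul, mul_comm]

theorem norm_sum_card_filter_dvd_mul_sub_le (ha : ∀ n, ‖a n‖ ≤ 1) (hu : ∀ n, ‖u n‖ ≤ 1)
    (hu_mult : ∀ m n, Nat.Coprime m n → u (m * n) = u m * u n) {I : Finset ℕ}
    (hI : ∀ p ∈ I, p.Prime) (N : ℕ) :
    ‖∑ n ∈ Ioc 0 N, #{p ∈ I | p ∣ n} * (a n * u n) -
      ∑ m ∈ Ioc 0 N, (∑ p ∈ I with p * m ≤ N, a (p * m) * u p) * u m‖ ≤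
      2 * (∑ p ∈ I, (1 : ℝ) / p ^ 2) * N := by
  have by_divisor : ∑ n ∈ Ioc 0 N, #{p ∈ I | p ∣ n} * (a n * u n) =
      ∑ p ∈ I, ∑ m ∈ Ioc 0 (N / p), a (p * m) * u (p * m) := by
    rw [sum_congr rfl fun p hp ↦ (sum_filter_dvd (hI p hp).ne_zero N fun n ↦ a n * u n).symm]
    simp_rw [← nsmul_eq_mul, ← sum_const, sum_filter]
    exact sum_comm
  have by_prime : ∑ m ∈ Ioc 0 N, (∑ p ∈ I with p * m ≤ N, a (p * m) * u p) * u m =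
      ∑ p ∈ I, ∑ m ∈ Ioc 0 (N / p), a (p * m) * (u p * u m) := by
    simp_rw [sum_mul, sum_filter, mul_assoc]
    rw [sum_comm]
    exact sum_congr rfl fun p hp ↦ by rw [← sum_filter, filter_mul_le_Ioc (hI p hp).ne_zero]
  rw [by_divisor, by_prime, ← sum_sub_distrib, mul_assoc, sum_mul, mul_sum]
  refine norm_sum_le_of_le _ fun p hp ↦ ?_
  calc _ ≤ 2 * ((N / p / p : ℕ) : ℝ) :=
        norm_sum_mul_apply_prime_mul_sub_le (fun m ↦ ha (p * m)) hu hu_mult (hI p hp) (N / p)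
    _ ≤ 2 * (1 / p ^ 2 * N) := by
        rw [Nat.div_div_eq_div_mul, one_div_mul_eq_div, sq, ← Nat.cast_mul p p]
        gcongr
        exact Nat.cast_div_le

theorem eventually_sum_norm_sum_filter_mul_le (ha : ∀ n, ‖a n‖ ≤ 1) (hu : ∀ n, ‖u n‖ ≤ 1)
    {I : Finset ℕ} (hne : I.Nonempty) (hI : 0 ∉ I)
    (hcorr : ∀ p ∈ I, ∀ q ∈ I, p ≠ q →
      (fun N ↦ ∑ m ∈ Ioc 0 N, a (p * m) * conj (a (q * m))) =o[atTop] fun N : ℕ ↦ (N : ℝ)) :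
    ∀ᶠ N : ℕ in atTop, ∑ m ∈ Ioc 0 N, ‖∑ p ∈ I with p * m ≤ N, a (p * m) * u p‖ ≤
      √(2 * ∑ p ∈ I, (1 : ℝ) / p) * N := by
  have hpos {p : ℕ} (hp : p ∈ I) : p ≠ 0 := ne_of_mem_of_not_mem hp hI
  have hd : 0 < ∑ p ∈ I, (1 : ℝ) / p :=
    sum_pos (fun p hp ↦ one_div_pos.2 (Nat.cast_pos.2 (hpos hp).pos)) hne
  have := eventually_sum_norm_sum_le_sqrt 𝕜 (l := atTop) (I := I) (T := fun N ↦ Ioc 0 N)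
    (z := fun N p m ↦ if p * m ≤ N then a (p * m) * u p else 0) hd ?_ ?_
  · simpa only [sum_filter, Nat.card_Ioc, Nat.sub_zero] using this
  · intro p hp N
    calc ∑ m ∈ Ioc 0 N, ‖if p * m ≤ N then a (p * m) * u p else 0‖ ^ 2
        ≤ ∑ m ∈ Ioc 0 N, if p * m ≤ N then 1 else 0 := by
          refine sum_le_sum fun m _ ↦ ?_
          split_ifs
          · exact pow_le_one₀ (norm_nonneg _)
              ((norm_mul_le_of_le (ha _) (hu p)).trans_eq (one_mul 1))
          · simp
      _ = (N / p : ℕ) := by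
          rw [sum_boole, filter_mul_le_Ioc (hpos hp), Nat.card_Ioc, Nat.sub_zero]
      _ ≤ 1 / p * #(Ioc 0 N) := by
          rw [Nat.card_Ioc, Nat.sub_zero, one_div_mul_eq_div]
          exact Nat.cast_div_le
  · intro p hp q hq hpq
    simp only [Nat.card_Ioc, Nat.sub_zero]
    have hmax : max p q ≠ 0 := (lt_max_of_lt_left (hpos hp).pos).ne'
    refine ((isLittleO_comp_div (hcorr q hq p hp hpq.symm) hmax).const_mul_left
      (conj (u p) * u q)).congr_left fun N ↦ ?_
    rw [← filter_mul_le_Ioc hmax, sum_filter, mul_sum]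
    refine sum_congr rfl fun m _ ↦ ?_
    simp only [max_mul, max_le_iff, ite_and]
    split_ifs
    · simp only [RCLike.inner_apply, map_mul]
      ring
    all_goals simp

theorem eventually_sum_one_div_mul_norm_sum_mul_le (ha : ∀ n, ‖a n‖ ≤ 1) (hu : ∀ n, ‖u n‖ ≤ 1)
    (hu_mult : ∀ m n, Nat.Coprime m n → u (m * n) = u m * u n) {I : Finset ℕ} (hne : I.Nonempty)
    (hI : ∀ p ∈ I, p.Prime)
    (hcorr : ∀ p ∈ I, ∀ q ∈ I, p ≠ q →
      (fun N ↦ ∑ m ∈ Ioc 0 N, a (p * m) * conj (a (q * m))) =o[atTop] fun N : ℕ ↦ (N : ℝ)) :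
    ∀ᶠ N : ℕ in atTop, (∑ p ∈ I, (1 : ℝ) / p) * ‖∑ n ∈ Ioc 0 N, a n * u n‖ ≤
      2 * (∑ p ∈ I, (1 : ℝ) / p ^ 2 + √(2 * ∑ p ∈ I, (1 : ℝ) / p)) * N := by
  have hcop : (I : Set ℕ).Pairwise Nat.Coprime := fun p hp q hq ↦
    (Nat.coprime_primes (hI p hp) (hI q hq)).2
  filter_upwards [eventually_sum_abs_card_filter_dvd_sub_le hcop,
    eventually_sum_norm_sum_filter_mul_le ha hu hne (fun h ↦ (hI 0 h).ne_zero rfl) hcorr]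
    with N hdivisors hbilinear
  set L := ∑ p ∈ I, (1 : ℝ) / p
  set S := ∑ n ∈ Ioc 0 N, a n * u n
  set W := ∑ n ∈ Ioc 0 N, #{p ∈ I | p ∣ n} * (a n * u n)
  set B := ∑ m ∈ Ioc 0 N, (∑ p ∈ I with p * m ≤ N, a (p * m) * u p) * u m
  have concentration : ‖L • S - W‖ ≤ √(2 * L) * N := by
    refine le_trans ?_ hdivisors
    rw [smul_sum, ← sum_sub_distrib]
    refine norm_sum_le_of_le _ fun n _ ↦ ?_
    rw [RCLike.real_smul_eq_coe_mul, ← RCLike.ofReal_natCast, ← sub_mul, ← RCLike.ofReal_sub,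
      norm_mul, RCLike.norm_ofReal, abs_sub_comm]
    exact mul_le_of_le_one_right (abs_nonneg _)
      ((norm_mul_le_of_le (ha n) (hu n)).trans_eq (one_mul 1))
  have bilinear : ‖B‖ ≤ √(2 * L) * N := (norm_sum_le_of_le _ fun m _ ↦
    (norm_mul_le_of_le le_rfl (hu m)).trans_eq (mul_one _)).trans hbilinear
  calc L * ‖S‖ = ‖(L • S - W) + (W - B) + B‖ := by
        rw [sub_add_sub_cancel, sub_add_cancel, norm_smul, Real.norm_of_nonneg (by positivity)]
    _ ≤ √(2 * L) * N + 2 * (∑ p ∈ I, (1 : ℝ) / p ^ 2) * N + √(2 * L) * N :=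
        norm_add_le_of_le (norm_add_le_of_le concentration
          (norm_sum_card_filter_dvd_mul_sub_le ha hu hu_mult hI N)) bilinear
    _ = 2 * (∑ p ∈ I, (1 : ℝ) / p ^ 2 + √(2 * L)) * N := by ring

theorem isLittleO_sum_mul_of_multiplicative (ha : ∀ n, ‖a n‖ ≤ 1) (hu : ∀ n, ‖u n‖ ≤ 1)
    (hu_mult : ∀ m n, Nat.Coprime m n → u (m * n) = u m * u n)
    (hcorr : ∀ p q, p.Prime → q.Prime → p ≠ q →
      (fun N ↦ ∑ m ∈ Ioc 0 N, a (p * m) * conj (a (q * m))) =o[atTop] fun N : ℕ ↦ (N : ℝ)) :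
    (fun N ↦ ∑ n ∈ Ioc 0 N, a n * u n) =o[atTop] fun N : ℕ ↦ (N : ℝ) := by
  refine isLittleO_iff.2 fun ε hε ↦ ?_
  set Z := ∑' n : ℕ, (1 : ℝ) / n ^ 2
  obtain ⟨I, hI, hIL⟩ := exists_finset_primes_le_sum_one_div (max (4 * Z / ε) (32 / ε ^ 2))
  set L := ∑ p ∈ I, (1 : ℝ) / p with hL
  have hZL : 4 * Z ≤ ε * L := (div_le_iff₀' hε).1 ((le_max_left _ _).trans hIL)
  have hεL : 32 ≤ ε ^ 2 * L := (div_le_iff₀' (by positivity)).1 ((le_max_right _ _).trans hIL)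
  have hLpos : 0 < L := pos_of_mul_pos_right (by linarith) (sq_nonneg ε)
  have sqrt_le : √(2 * L) ≤ ε * L / 4 := by
    refine Real.sqrt_le_left (by positivity) |>.2 ?_
    nlinarith
  have square_le : ∑ p ∈ I, (1 : ℝ) / p ^ 2 ≤ Z :=
    (Real.summable_one_div_nat_pow.2 one_lt_two).sum_le_tsum I fun n _ ↦ by positivity
  have hne : I.Nonempty := nonempty_of_sum_ne_zero (hL ▸ hLpos.ne')
  filter_upwards [eventually_sum_one_div_mul_norm_sum_mul_le ha hu hu_mult hne hI
    fun p hp q hq ↦ hcorr p q (hI p hp) (hI q hq)] with N hN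
  rw [RCLike.norm_natCast, ← mul_le_mul_iff_right₀ hLpos]
  calc L * ‖∑ n ∈ Ioc 0 N, a n * u n‖ ≤ 2 * (∑ p ∈ I, (1 : ℝ) / p ^ 2 + √(2 * L)) * N := hN
    _ ≤ 2 * (ε * L / 4 + ε * L / 4) * N := by
        gcongr
        linarith
    _ = L * (ε * N) := by ring

end KataiBourgainSarnakZiegler

section Blocks

/-- The index `k` of the block `[β k, β (k + 1))` containing `n`, for a strictly increasing `β`;
it is `0` if `n < β 0`. Searching up to `n` is enough because `k ≤ β k`. -/
def blockIndex (β : ℕ → ℕ) (n : ℕ) : ℕ :=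
  Nat.findGreatest (β · ≤ n) n

theorem monotone_blockIndex (β : ℕ → ℕ) : Monotone (blockIndex β) := fun _ _ hmn ↦
  Nat.findGreatest_mono (fun _ hk ↦ hk.trans hmn) hmn

variable {β : ℕ → ℕ}

theorem apply_blockIndex_le {n : ℕ} (hn : β 0 ≤ n) : β (blockIndex β n) ≤ n :=
  Nat.findGreatest_spec (P := (β · ≤ n)) n.zero_le hn

theorem blockIndex_eq (hβ : StrictMono β) {k n : ℕ} (hn : n ∈ Ico (β k) (β (k + 1))) :
    blockIndex β n = k := by
  rw [mem_Ico] at hn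
  refine Nat.findGreatest_eq_iff.2 ⟨hβ.le_apply.trans hn.1, fun _ ↦ hn.1, fun j hj _ hjn ↦ ?_⟩
  exact (hn.2.trans_le (hβ.monotone hj)).not_ge hjn

theorem tendsto_blockIndex (hβ : StrictMono β) : Tendsto (blockIndex β) atTop atTop :=
  (monotone_blockIndex β).tendsto_atTop_atTop fun k ↦
    ⟨β k, (blockIndex_eq hβ (left_mem_Ico.2 (hβ k.lt_succ_self))).ge⟩

theorem sum_range_sum_Ico {M : Type*} [AddCommMonoid M] (hβ : Monotone β) (f : ℕ → M) (K : ℕ) :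
    ∑ k ∈ range K, ∑ n ∈ Ico (β k) (β (k + 1)), f n = ∑ n ∈ Ico (β 0) (β K), f n := by
  induction K with
  | zero => simp
  | succ K ih =>
    rw [sum_range_succ, ih, sum_Ico_consecutive f (hβ K.zero_le) (hβ K.le_succ)]

theorem isLittleO_natCast_of_tendsto_sub (hβ : StrictMono β)
    (hgap : Tendsto (fun k ↦ β (k + 1) - β k) atTop atTop) :
    (fun k : ℕ ↦ (k : ℝ)) =o[atTop] fun k ↦ (β k : ℝ) := by
  have telescope (k : ℕ) : ∑ j ∈ range k, ((β (j + 1) - β j : ℕ) : ℝ) = β k - β 0 := by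
    simp_rw [fun j : ℕ ↦ Nat.cast_sub (R := ℝ) (hβ.monotone j.le_succ)]
    exact sum_range_sub (fun j ↦ (β j : ℝ)) k
  have hβ_top : Tendsto (fun k ↦ (β k : ℝ)) atTop atTop :=
    tendsto_natCast_atTop_atTop.comp hβ.tendsto_atTop
  have sum_isLittleO := (isLittleO_const_natCast hgap (1 : ℝ)).sum_range
    (fun _ ↦ Nat.cast_nonneg _)
    (by simpa only [telescope, sub_eq_add_neg] using hβ_top.atTop_add tendsto_const_nhds)
  simp only [telescope, sum_const, card_range, nsmul_eq_mul, mul_one] at sum_isLittleO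
  refine sum_isLittleO.trans_isBigO (.of_bound' (.of_forall fun k ↦ ?_))
  rw [← Nat.cast_sub (hβ.monotone k.zero_le), RCLike.norm_natCast, RCLike.norm_natCast]
  exact_mod_cast Nat.sub_le _ _

theorem isLittleO_blockIndex (hβ : StrictMono β)
    (hgap : Tendsto (fun k ↦ β (k + 1) - β k) atTop atTop) :
    (fun n ↦ (blockIndex β n : ℝ)) =o[atTop] fun n : ℕ ↦ (n : ℝ) := by
  refine ((isLittleO_natCast_of_tendsto_sub hβ hgap).comp_tendsto
    (tendsto_blockIndex hβ)).trans_isBigO (.of_bound' ?_)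
  filter_upwards [eventually_ge_atTop (β 0)] with n hn
  simpa using apply_blockIndex_le hn

variable {𝕜 : Type*} [RCLike 𝕜] {c u w : ℕ → 𝕜}

theorem HasUniformMeanZero.isLittleO_sum_Ioc_mul_conj {p q : ℕ}
    (hcorr : HasUniformMeanZero fun m ↦ w (p * m) * conj (w (q * m))) (hp : p ≠ 0) (hq : q ≠ 0)
    (hw : ∀ n, ‖w n‖ ≤ 1) (hc : ∀ k, ‖c k‖ ≤ 1) {κ : ℕ → ℕ} (hκ : Monotone κ)
    (hκo : (fun n ↦ (κ n : ℝ)) =o[atTop] fun n : ℕ ↦ (n : ℝ)) :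
    (fun N ↦ ∑ m ∈ Ioc 0 N, c (κ (p * m)) * w (p * m) * conj (c (κ (q * m)) * w (q * m)))
      =o[atTop] fun N : ℕ ↦ (N : ℝ) := by
  have variation {r : ℕ} (hr : r ≠ 0) : HasSublinearVariation fun m ↦ c (κ (r * m)) := by
    refine .comp_of_monotone hc (hκ.comp fun m n hmn ↦ Nat.mul_le_mul_left r hmn) ?_
    refine (hκo.comp_tendsto (tendsto_id.const_mul_atTop' hr.pos)).trans_isBigO ?_
    simpa [Function.comp_def] using isBigO_const_mul_self (r : ℝ) (fun n : ℕ ↦ (n : ℝ)) atTop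
  have hc' (k : ℕ) : ‖conj (c k)‖ ≤ 1 := (RCLike.norm_conj _).trans_le (hc k)
  have hw' (n : ℕ) : ‖conj (w n)‖ ≤ 1 := (RCLike.norm_conj _).trans_le (hw n)
  refine isLittleO_sum_Ioc_iff.2 ((hcorr.isLittleO_sum_mul
    (fun m ↦ (norm_mul_le_of_le (hc _) (hc' _)).trans_eq (one_mul 1))
    (fun m ↦ (norm_mul_le_of_le (hw _) (hw' _)).trans_eq (one_mul 1))
    ((variation hp).mul (variation hq).star (fun m ↦ hc _) fun m ↦ hc' _)).congr_left fun N ↦ ?_)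
  exact sum_congr rfl fun m _ ↦ by rw [map_mul, mul_mul_mul_comm]

theorem isLittleO_sum_norm_sum_Ico_mul (hu : ∀ n, ‖u n‖ ≤ 1)
    (hu_mult : ∀ m n, Nat.Coprime m n → u (m * n) = u m * u n) (hw : ∀ n, ‖w n‖ ≤ 1)
    (hcorr : ∀ p q, p.Prime → q.Prime → p ≠ q →
      HasUniformMeanZero fun m ↦ w (p * m) * conj (w (q * m)))
    (hβ : StrictMono β) (hgap : Tendsto (fun k ↦ β (k + 1) - β k) atTop atTop) :
    (fun K ↦ ∑ k ∈ range K, ‖∑ n ∈ Ico (β k) (β (k + 1)), w n * u n‖)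
      =o[atTop] fun K ↦ (β K : ℝ) := by
  choose c hc hphase using fun k ↦
    RCLike.exists_norm_eq_mul_self (∑ n ∈ Ico (β k) (β (k + 1)), w n * u n)
  set a : ℕ → 𝕜 := fun n ↦ c (blockIndex β n) * w n
  have sum_blocks (K : ℕ) : ((∑ k ∈ range K, ‖∑ n ∈ Ico (β k) (β (k + 1)), w n * u n‖ : ℝ) : 𝕜) =
      ∑ n ∈ range (β K), a n * u n - ∑ n ∈ range (β 0), a n * u n := by
    rw [← sum_Ico_eq_sub _ (hβ.monotone K.zero_le), ← sum_range_sum_Ico hβ.monotone,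
      RCLike.ofReal_sum]
    refine sum_congr rfl fun k _ ↦ ?_
    rw [hphase, mul_sum]
    exact sum_congr rfl fun n hn ↦ by simp only [a, blockIndex_eq hβ hn, mul_assoc]
  have orthogonal : (fun N ↦ ∑ n ∈ range N, a n * u n) =o[atTop] fun N : ℕ ↦ (N : ℝ) :=
    isLittleO_sum_Ioc_iff.1 <| isLittleO_sum_mul_of_multiplicative
      (fun n ↦ (norm_mul_le_of_le (hc _).le (hw n)).trans_eq (one_mul 1)) hu hu_mult
      fun p q hp hq hpq ↦ (hcorr p q hp hq hpq).isLittleO_sum_Ioc_mul_conj hp.ne_zero hq.ne_zero hw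
        (fun k ↦ (hc k).le) (monotone_blockIndex β) (isLittleO_blockIndex hβ hgap)
  refine IsBigO.trans_isLittleO (.of_bound' (.of_forall fun K ↦ ?_))
    ((orthogonal.comp_tendsto hβ.tendsto_atTop).sub
      (isLittleO_const_natCast hβ.tendsto_atTop (∑ n ∈ range (β 0), a n * u n)))
  exact (RCLike.norm_ofReal (K := 𝕜) _).ge.trans_eq (congrArg norm (sum_blocks K))

end Blocks

theorem hasUniformMeanZero_fourierChar_mul_conj {P : ℝ[X]} (hdeg : P.natDegree ≠ 0)
    (hirr : Irrational P.leadingCoeff) {p q : ℕ} (hpq : p ≠ q) :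
    HasUniformMeanZero fun m ↦
      (𝐞 (P.eval ((p * m : ℕ) : ℝ)) * conj (𝐞 (P.eval ((q * m : ℕ) : ℝ)) : ℂ) : ℂ) := by
  have natDegree_dilate_le (r : ℝ) : (P.comp (C r * X)).natDegree ≤ P.natDegree :=
    natDegree_comp_le.trans <|
      (Nat.mul_le_mul_left _ ((natDegree_C_mul_le r X).trans natDegree_X_le)).trans_eq (mul_one _)
  have leading : (P.comp (C (p : ℝ) * X) - P.comp (C (q : ℝ) * X)).coeff P.natDegree =
      ((p ^ P.natDegree - q ^ P.natDegree : ℤ) : ℝ) * P.leadingCoeff := by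
    rw [coeff_sub, comp_C_mul_X_coeff, comp_C_mul_X_coeff, leadingCoeff]
    push_cast
    ring
  have powers_ne : (p ^ P.natDegree - q ^ P.natDegree : ℤ) ≠ 0 :=
    sub_ne_zero.2 fun h ↦ hpq (Nat.pow_left_injective hdeg (by exact_mod_cast h))
  convert hasUniformMeanZero_fourierChar hdeg
    ((natDegree_sub_le_of_le (natDegree_dilate_le p) (natDegree_dilate_le q)).trans_eq
      (max_self _))
    (leading ▸ hirr.intCast_mul powers_ne) using 2 with m
  simp only [eval_sub, eval_comp, eval_mul, eval_C, eval_X, fourierChar_sub, Nat.cast_mul]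

/-- **Theorem 1.5.** For every multiplicative `u : ℕ → ℂ` with `|u| ≤ 1`, every increasing
sequence `1 = b₁ < b₂ < ⋯` with `b_{k+1} - b_k → ∞`, and every non-constant real polynomial
`P` with irrational leading coefficient,
`(1/b_{K+1}) ∑_{k ≤ K} |∑_{b_k ≤ n < b_{k+1}} e^{2πi P(n)} u(n)| → 0` as `K → ∞`. -/
theorem polynomial_short_interval_orthogonality
    (u : ℕ → ℂ) (hu_mult : ∀ m n : ℕ, Nat.Coprime m n → u (m * n) = u m * u n)
    (hu_bd : ∀ n, ‖u n‖ ≤ 1)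
    (b : ℕ → ℕ) (hb1 : b 1 = 1) (hbmono : ∀ k ≥ 1, b k < b (k + 1))
    (hbgap : Tendsto (fun k : ℕ => b (k + 1) - b k) atTop atTop)
    (P : Polynomial ℝ) (hPdeg : 0 < P.natDegree) (hPirr : Irrational P.leadingCoeff) :
    Tendsto (fun K : ℕ => (b (K + 1) : ℝ)⁻¹ *
        ∑ k ∈ Finset.Icc 1 K, ‖∑ n ∈ Finset.Ico (b k) (b (k + 1)),
          Complex.exp (2 * Real.pi * Complex.I * ((P.eval (n : ℝ) : ℝ) : ℂ)) * u n‖)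
      atTop (nhds 0) := by
  have hβ : StrictMono fun k ↦ b (k + 1) :=
    strictMono_nat_of_lt_succ fun k ↦ hbmono (k + 1) k.succ_pos
  have phase (n : ℕ) : Complex.exp (2 * Real.pi * Complex.I * ((P.eval (n : ℝ) : ℝ) : ℂ)) =
      𝐞 (P.eval (n : ℝ)) := by
    rw [Real.fourierChar_apply]
    push_cast
    ring_nf
  have main := isLittleO_sum_norm_sum_Ico_mul hu_bd hu_mult
    (w := fun n ↦ (𝐞 (P.eval (n : ℝ)) : ℂ)) (fun n ↦ (Circle.norm_coe _).le)
    (fun p q _ _ hpq ↦ hasUniformMeanZero_fourierChar_mul_conj hPdeg.ne' hPirr hpq) hβ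
    (hbgap.comp (tendsto_add_atTop_nat 1))
  refine main.tendsto_inv_smul_nhds_zero.congr fun K ↦ ?_
  simp_rw [phase]
  rw [smul_eq_mul, range_eq_Ico, sum_Ico_add' (fun k ↦ ‖∑ n ∈ Ico (b k) (b (k + 1)),
    (𝐞 (P.eval (n : ℝ)) : ℂ) * u n‖) 0 K 1, zero_add]
  rfl
end
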